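/- arXiv:2503.17558 — 3 statements merged into one kernel-verified Lean document; each statement's English description precedes it below -/
import Mathlib

section
/- Let σ > 0 and let P, D be reals with 0 ≤ P ≤ σ², 0 < D ≤ 2σ², and √P < σ − √|σ² − D|. Set θ := σ² + (σ − √P)² − D, η² := σ²·(4σ²(σ − √P)²/θ² − 1), and c := (σ − √P)/√(σ² + η²). Then: (i) θ > 0; (ii) η² > 0; (iii) c = θ/(2σ²); (iv) (1 − c)²σ² + c²η² = D; (v) c²(σ² + η²) = (σ − √P)²; and (vi) 1 + σ²/η² = σ²(σ − √P)² / (σ²(σ − √P)² − θ²/4), so that (1/2)·log(1 + σ²/η²) = (1/2)·log( σ²(σ − √P)² / ( σ²(σ − √P)² − (1/4)(σ² + (σ − √P)² − D)² ) ). -/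
/-!
For centered Gaussians `X` and `Y` with standard deviations `σ` and `τ = σ - √P`, a mean-squared
distortion `D` forces `θ = σ² + τ² - D = 2 𝔼[XY]`, so the correlation is `θ / (2στ)`. The noise
variance is the one for which `c (X + Z)` has this correlation with `X`, and then the gain giving
it variance `τ²` is the regression coefficient `θ / (2σ²)`. The channel is nondegenerate exactly
when the correlation lies strictly between `0` and `1`, that is, when
`(σ - τ)² < D < σ² + τ²`; the regime `√P < σ - √|σ² - D|` lies inside this window.
-/

/-- Noise variance `η²` of the test channel `X ↦ c (X + Z)` from a Gaussian source of standard
deviation `σ` to a reconstruction of standard deviation `τ`, where `θ` is twice the covariance of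
source and reconstruction. -/
noncomputable def noiseVariance (σ τ θ : ℝ) : ℝ :=
  σ ^ 2 * (4 * σ ^ 2 * τ ^ 2 / θ ^ 2 - 1)

/-- Gain `c` of the test channel `X ↦ c (X + Z)`, chosen so that its output has standard
deviation `τ`. -/
noncomputable def channelGain (σ τ θ : ℝ) : ℝ :=
  τ / √(σ ^ 2 + noiseVariance σ τ θ)

section TestChannel

variable {σ τ θ : ℝ}

lemma sq_add_noiseVariance (hθ : θ ≠ 0) :
    σ ^ 2 + noiseVariance σ τ θ = (2 * σ ^ 2 * τ / θ) ^ 2 := by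
  rw [noiseVariance]
  field_simp
  ring

lemma noiseVariance_eq_div (hθ : θ ≠ 0) :
    noiseVariance σ τ θ = 4 * σ ^ 2 * (σ ^ 2 * τ ^ 2 - θ ^ 2 / 4) / θ ^ 2 := by
  rw [noiseVariance]
  field_simp

lemma noiseVariance_pos (hσ : σ ≠ 0) (hθ : θ ≠ 0) (hθτ : θ ^ 2 / 4 < σ ^ 2 * τ ^ 2) :
    0 < noiseVariance σ τ θ := by
  rw [noiseVariance_eq_div hθ]
  exact div_pos (mul_pos (by positivity) (sub_pos.mpr hθτ)) (by positivity)

lemma one_add_sq_div_noiseVariance (hσ : σ ≠ 0) (hθ : θ ≠ 0)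
    (hθτ : θ ^ 2 / 4 < σ ^ 2 * τ ^ 2) :
    1 + σ ^ 2 / noiseVariance σ τ θ = σ ^ 2 * τ ^ 2 / (σ ^ 2 * τ ^ 2 - θ ^ 2 / 4) := by
  have hgap : σ ^ 2 * τ ^ 2 - θ ^ 2 / 4 ≠ 0 := (sub_pos.mpr hθτ).ne'
  calc 1 + σ ^ 2 / noiseVariance σ τ θ
      = (σ ^ 2 + noiseVariance σ τ θ) / noiseVariance σ τ θ := by
        rw [one_add_div (noiseVariance_pos hσ hθ hθτ).ne', add_comm]
    _ = (2 * σ ^ 2 * τ / θ) ^ 2 / (4 * σ ^ 2 * (σ ^ 2 * τ ^ 2 - θ ^ 2 / 4) / θ ^ 2) := by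
        rw [sq_add_noiseVariance hθ, noiseVariance_eq_div hθ]
    _ = σ ^ 2 * τ ^ 2 / (σ ^ 2 * τ ^ 2 - θ ^ 2 / 4) := by
        generalize σ ^ 2 * τ ^ 2 - θ ^ 2 / 4 = gap at *
        field_simp
        ring

lemma channelGain_eq_div (hτ : 0 < τ) (hθ : 0 < θ) :
    channelGain σ τ θ = θ / (2 * σ ^ 2) := by
  rw [channelGain, sq_add_noiseVariance hθ.ne', Real.sqrt_sq (by positivity)]
  field_simp

lemma channelGain_sq_mul (hσ : σ ≠ 0) (hτ : 0 < τ) (hθ : 0 < θ) :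
    channelGain σ τ θ ^ 2 * (σ ^ 2 + noiseVariance σ τ θ) = τ ^ 2 := by
  rw [channelGain_eq_div hτ hθ, sq_add_noiseVariance hθ.ne']
  field_simp

lemma channelGain_distortion (hσ : σ ≠ 0) (hτ : 0 < τ) (hθ : 0 < θ) :
    (1 - channelGain σ τ θ) ^ 2 * σ ^ 2 + channelGain σ τ θ ^ 2 * noiseVariance σ τ θ
      = σ ^ 2 + τ ^ 2 - θ := by
  have hcov : 2 * σ ^ 2 * channelGain σ τ θ = θ := by
    rw [channelGain_eq_div hτ hθ]
    field_simp
  linear_combination channelGain_sq_mul hσ hτ hθ - hcov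

end TestChannel

section Regime

variable {σ p D : ℝ}

lemma sq_lt_of_lt_sub_sqrt_abs (hp : 0 ≤ p) (h : p < σ - √|σ ^ 2 - D|) : p ^ 2 < D := by
  have hroot : √|σ ^ 2 - D| ^ 2 = |σ ^ 2 - D| := Real.sq_sqrt (abs_nonneg _)
  have hroot_le : √|σ ^ 2 - D| ≤ σ := by linarith
  calc p ^ 2 < (σ - √|σ ^ 2 - D|) ^ 2 := by gcongr
    _ ≤ σ ^ 2 - √|σ ^ 2 - D| ^ 2 := by
        nlinarith [mul_nonneg (Real.sqrt_nonneg |σ ^ 2 - D|) (sub_nonneg.mpr hroot_le)]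
    _ ≤ D := by linarith [le_abs_self (σ ^ 2 - D)]

lemma lt_sq_add_sq_of_lt_sub_sqrt_abs (h : p < σ - √|σ ^ 2 - D|) :
    D < σ ^ 2 + (σ - p) ^ 2 := by
  have habs : |σ ^ 2 - D| < (σ - p) ^ 2 := Real.lt_sq_of_sqrt_lt (by linarith)
  linarith [neg_abs_le (σ ^ 2 - D)]

end Regime

theorem gaussian_rdp_parameters_general (σ τ D θ η2 c : ℝ) (hσ : 0 < σ)
    (hD_lower : (σ - τ) ^ 2 < D) (hD_upper : D < σ ^ 2 + τ ^ 2)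
    (hθ : θ = σ ^ 2 + τ ^ 2 - D)
    (hη2 : η2 = σ ^ 2 * (4 * σ ^ 2 * τ ^ 2 / θ ^ 2 - 1))
    (hc : c = τ / √(σ ^ 2 + η2)) :
    0 < θ ∧
    0 < η2 ∧
    c = θ / (2 * σ ^ 2) ∧
    (1 - c) ^ 2 * σ ^ 2 + c ^ 2 * η2 = D ∧
    c ^ 2 * (σ ^ 2 + η2) = τ ^ 2 ∧
    1 + σ ^ 2 / η2 = σ ^ 2 * τ ^ 2 / (σ ^ 2 * τ ^ 2 - θ ^ 2 / 4) ∧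
    (1 / 2) * Real.log (1 + σ ^ 2 / η2)
      = (1 / 2) * Real.log (σ ^ 2 * τ ^ 2 /
          (σ ^ 2 * τ ^ 2 - (1 / 4) * (σ ^ 2 + τ ^ 2 - D) ^ 2)) := by
  obtain rfl : η2 = noiseVariance σ τ θ := hη2
  obtain rfl : c = channelGain σ τ θ := hc
  have hθ_pos : 0 < θ := by linarith
  have hθ_lt : θ < 2 * σ * τ := by linarith
  have hτ : 0 < τ := pos_of_mul_pos_right (hθ_pos.trans hθ_lt) (by positivity)
  have hθτ : θ ^ 2 / 4 < σ ^ 2 * τ ^ 2 := by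
    have hsq : θ ^ 2 < (2 * σ * τ) ^ 2 := by gcongr
    linarith
  have hrate := one_add_sq_div_noiseVariance hσ.ne' hθ_pos.ne' hθτ
  refine ⟨hθ_pos, noiseVariance_pos hσ.ne' hθ_pos.ne' hθτ, channelGain_eq_div hτ hθ_pos, ?_,
    channelGain_sq_mul hσ.ne' hτ hθ_pos, hrate, ?_⟩
  · rw [channelGain_distortion hσ.ne' hτ hθ_pos, hθ, sub_sub_cancel]
  · rw [hrate, ← hθ, one_div_mul_eq_div 4]

/-- Parameter identities for the Gaussian RDP achievability proof in the
regime `√P < σ - √|σ² - D|`. -/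
theorem gaussian_rdp_parameters
    (σ P D θ η2 c : ℝ)
    (hσ : 0 < σ)
    (hP0 : 0 ≤ P) (hPσ : P ≤ σ ^ 2)
    (hD0 : 0 < D) (hD2 : D ≤ 2 * σ ^ 2)
    (hreg : Real.sqrt P < σ - Real.sqrt |σ ^ 2 - D|)
    (hθ : θ = σ ^ 2 + (σ - Real.sqrt P) ^ 2 - D)
    (hη2 : η2 = σ ^ 2 * (4 * σ ^ 2 * (σ - Real.sqrt P) ^ 2 / θ ^ 2 - 1))
    (hc : c = (σ - Real.sqrt P) / Real.sqrt (σ ^ 2 + η2)) :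
    0 < θ ∧
    0 < η2 ∧
    c = θ / (2 * σ ^ 2) ∧
    (1 - c) ^ 2 * σ ^ 2 + c ^ 2 * η2 = D ∧
    c ^ 2 * (σ ^ 2 + η2) = (σ - Real.sqrt P) ^ 2 ∧
    1 + σ ^ 2 / η2
      = σ ^ 2 * (σ - Real.sqrt P) ^ 2 / (σ ^ 2 * (σ - Real.sqrt P) ^ 2 - θ ^ 2 / 4) ∧
    (1 / 2) * Real.log (1 + σ ^ 2 / η2)
      = (1 / 2) * Real.log (σ ^ 2 * (σ - Real.sqrt P) ^ 2 /
          (σ ^ 2 * (σ - Real.sqrt P) ^ 2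
            - (1 / 4) * (σ ^ 2 + (σ - Real.sqrt P) ^ 2 - D) ^ 2)) :=
  gaussian_rdp_parameters_general σ (σ - √P) D θ η2 c hσ
    (by simpa only [sub_sub_cancel] using sq_lt_of_lt_sub_sqrt_abs (Real.sqrt_nonneg P) hreg)
    (lt_sq_add_sq_of_lt_sub_sqrt_abs hreg) hθ hη2 hc
end

section
/- Let n ≥ 1, σ > 0, and 0 ≤ τ ≤ σ. Let ν be a probability measure on ℝⁿ with finite Kullback–Leibler divergence KL(ν ‖ γ_τ⁽ⁿ⁾). Then there exists a coupling π of γ_σ⁽ⁿ⁾ and ν such that (∫ ‖x − y‖² dπ(x, y))^{1/2} ≤ √n·(σ − τ) + √(2σ²·KL(ν ‖ γ_τ⁽ⁿ⁾)). -/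
open MeasureTheory ProbabilityTheory
open scoped ENNReal NNReal

/-- The Kullback–Leibler divergence `∫ log(dμ/dν) dμ` (natural logarithm), equal to `∞`
when `μ` is not absolutely continuous w.r.t. `ν` or the log-likelihood ratio is not
integrable. -/
noncomputable def klDiv {α : Type*} [MeasurableSpace α] (μ ν : Measure α) : ℝ≥0∞ := by
  classical
  exact if μ ≪ ν ∧ Integrable (llr μ ν) μ then ENNReal.ofReal (∫ x, llr μ ν x ∂μ) else ⊤

/-- The centered Gaussian measure on `ℝⁿ` (as `EuclideanSpace ℝ (Fin n)`) with
covariance `σ² · Iₙ`, i.e. the `n`-fold product of `N(0, σ²)`. -/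
noncomputable def gaussianE (n : ℕ) (σ : ℝ) : Measure (EuclideanSpace ℝ (Fin n)) :=
  (Measure.pi fun _ : Fin n => gaussianReal 0 (σ ^ 2).toNNReal).map
    (MeasurableEquiv.toLp 2 (Fin n → ℝ))

/-!
Let `F` be the distribution function of `μ ≪ N(m, v)` on `ℝ`, let `φ` be the density of `N(m, v)`,
and let `S` be the monotone map of `μ` onto `N(m, v)`. Apply the linearised Donsker–Varadhan
inequality `∫ g ∂μ + 1 ≤ KL(μ ‖ N(m, v)) + ∫_B exp g ∂N(m, v)` to
`g = ((x - m)² - (S x - m)²) / (2v)` on `B = {0 < F < 1}`, a set of full `μ`-measure. The last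
integral is `∫_B φ (S x) dx`, and since `v φ (S x)` is the tail integral of `S - m` beyond `x`,
Fubini turns it into `v⁻¹ ∫ x (S x - m) ∂μ`. Hence `∫ (x - S x)² ∂μ = 2v (∫ g ∂μ + 1 - ∫_B φ ∘ S)`
is at most `2v KL(μ ‖ N(m, v))`, without any regularity of `S`.

The chain rule for the relative entropy tensorises this to `ℝⁿ`: split off one coordinate at a
time and move each of its conditional laws by its own monotone map. Gluing the resulting map of `ν`
onto `N(0, τ² Iₙ)` with the coupling `(σ Z, τ Z)`, whose cost is `n (σ - τ)²`, and applying
Minkowski's inequality in `L²` gives the bound.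
-/

section Entropy

variable {α : Type*} [MeasurableSpace α]

lemma lintegral_mul_exp_neg_llr_le {μ ν : Measure α} [SigmaFinite μ] [SigmaFinite ν]
    (hμν : μ ≪ ν) {f : α → ℝ≥0∞} (hf : Measurable f) :
    ∫⁻ x, f x * ENNReal.ofReal (Real.exp (-llr μ ν x)) ∂μ ≤ ∫⁻ x, f x ∂ν :=
  calc ∫⁻ x, f x * ENNReal.ofReal (Real.exp (-llr μ ν x)) ∂μ
    _ = ∫⁻ x, (ν.rnDeriv μ * f) x ∂μ := by
      refine lintegral_congr_ae ?_
      filter_upwards [exp_neg_llr hμν, ν.rnDeriv_lt_top μ] with x hx hx_top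
      rw [hx, ENNReal.ofReal_toReal hx_top.ne, Pi.mul_apply, mul_comm]
    _ = ∫⁻ x, f x ∂(μ.withDensity (ν.rnDeriv μ)) :=
      (lintegral_withDensity_eq_lintegral_mul _ (Measure.measurable_rnDeriv _ _) hf).symm
    _ ≤ ∫⁻ x, f x ∂ν := lintegral_mono' (Measure.withDensity_rnDeriv_le _ _) le_rfl

lemma lintegral_ofReal_exp_sub_llr_le {μ ν : Measure α} [SigmaFinite μ] [SigmaFinite ν]
    (hμν : μ ≪ ν) {g : α → ℝ} (hg : Measurable g) {s : Set α} (hs : MeasurableSet s)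
    (hsμ : ∀ᵐ x ∂μ, x ∈ s) :
    ∫⁻ x, ENNReal.ofReal (Real.exp (g x - llr μ ν x)) ∂μ
      ≤ ∫⁻ x in s, ENNReal.ofReal (Real.exp (g x)) ∂ν := by
  rw [← lintegral_indicator hs]
  refine le_of_eq_of_le (lintegral_congr_ae ?_)
    (lintegral_mul_exp_neg_llr_le hμν (Measurable.indicator (by fun_prop) hs))
  filter_upwards [hsμ] with x hx
  rw [Set.indicator_of_mem hx, ← ENNReal.ofReal_mul (Real.exp_pos _).le, ← Real.exp_add,
    sub_eq_add_neg]

lemma integrable_exp_sub_llr {μ ν : Measure α} [SigmaFinite μ] [SigmaFinite ν]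
    (hμν : μ ≪ ν) {g : α → ℝ} (hg : Measurable g) {s : Set α} (hs : MeasurableSet s)
    (hsμ : ∀ᵐ x ∂μ, x ∈ s) (hexp : IntegrableOn (fun x => Real.exp (g x)) s ν) :
    Integrable (fun x => Real.exp (g x - llr μ ν x)) μ := by
  refine (lintegral_ofReal_ne_top_iff_integrable
    (by fun_prop) (ae_of_all _ fun _ => (Real.exp_pos _).le)).1 ?_
  exact ne_top_of_le_ne_top hexp.lintegral_lt_top.ne
    (lintegral_ofReal_exp_sub_llr_le hμν hg hs hsμ)

lemma integral_exp_sub_llr_le {μ ν : Measure α} [SigmaFinite μ] [SigmaFinite ν]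
    (hμν : μ ≪ ν) {g : α → ℝ} (hg : Measurable g) {s : Set α} (hs : MeasurableSet s)
    (hsμ : ∀ᵐ x ∂μ, x ∈ s) (hexp : IntegrableOn (fun x => Real.exp (g x)) s ν) :
    ∫ x, Real.exp (g x - llr μ ν x) ∂μ ≤ ∫ x in s, Real.exp (g x) ∂ν := by
  have hle := lintegral_ofReal_exp_sub_llr_le hμν hg hs hsμ
  rwa [← ofReal_integral_eq_lintegral_ofReal (integrable_exp_sub_llr hμν hg hs hsμ hexp)
      (ae_of_all _ fun _ => (Real.exp_pos _).le),
    ← ofReal_integral_eq_lintegral_ofReal hexp (ae_of_all _ fun _ => (Real.exp_pos _).le),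
    ENNReal.ofReal_le_ofReal_iff (integral_nonneg fun _ => (Real.exp_pos _).le)] at hle

lemma integrable_of_integrable_exp_of_integrable_llr {μ ν : Measure α} [SigmaFinite μ]
    [SigmaFinite ν] (hμν : μ ≪ ν) (hllr : Integrable (llr μ ν) μ) {g : α → ℝ}
    (hg : Measurable g) (hg_nonneg : ∀ x, 0 ≤ g x)
    (hexp : Integrable (fun x => Real.exp (g x)) ν) : Integrable g μ := by
  have hexp_sub := integrable_exp_sub_llr hμν hg .univ (ae_of_all _ Set.mem_univ)
    hexp.integrableOn
  refine (hllr.add hexp_sub).mono' hg.aestronglyMeasurable (ae_of_all _ fun x => ?_)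
  rw [Real.norm_of_nonneg (hg_nonneg x), Pi.add_apply]
  linarith [Real.add_one_le_exp (g x - llr μ ν x)]

/-- The linearised form of the Donsker–Varadhan inequality
`∫ g ∂μ ≤ KL(μ ‖ ν) + log ∫ exp g ∂ν`. -/
lemma integral_add_one_le_integral_llr_add_integral_exp {μ ν : Measure α}
    [IsProbabilityMeasure μ] [SigmaFinite ν] (hμν : μ ≪ ν) (hllr : Integrable (llr μ ν) μ)
    {g : α → ℝ} (hg : Measurable g) (hgμ : Integrable g μ) {s : Set α} (hs : MeasurableSet s)
    (hsμ : ∀ᵐ x ∂μ, x ∈ s) (hexp : IntegrableOn (fun x => Real.exp (g x)) s ν) :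
    ∫ x, g x ∂μ + 1 ≤ ∫ x, llr μ ν x ∂μ + ∫ x in s, Real.exp (g x) ∂ν := by
  have hsub : Integrable (fun x => g x - llr μ ν x) μ := hgμ.sub hllr
  have hlin : ∫ x, (g x - llr μ ν x + 1) ∂μ ≤ ∫ x, Real.exp (g x - llr μ ν x) ∂μ :=
    integral_mono (hsub.add (integrable_const 1))
      (integrable_exp_sub_llr hμν hg hs hsμ hexp) fun x => Real.add_one_le_exp _
  have hsplit : ∫ x, (g x - llr μ ν x + 1) ∂μ = ∫ x, g x ∂μ - ∫ x, llr μ ν x ∂μ + 1 := by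
    rw [integral_add hsub (integrable_const 1), integral_sub hgμ hllr]
    simp
  linarith [integral_exp_sub_llr_le hμν hg hs hsμ hexp]

lemma informationTheory_klDiv_of_isProbabilityMeasure {μ ν : Measure α} [IsProbabilityMeasure μ]
    [IsProbabilityMeasure ν] (hμν : μ ≪ ν) (hllr : Integrable (llr μ ν) μ) :
    InformationTheory.klDiv μ ν = ENNReal.ofReal (∫ x, llr μ ν x ∂μ) := by
  simp [InformationTheory.klDiv_of_ac_of_integrable hμν hllr]

variable {β : Type*} [MeasurableSpace β] [MeasurableSpace.CountableOrCountablyGenerated α β]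

lemma rnDeriv_compProd_right {μ : Measure α} [IsFiniteMeasure μ] {κ η : Kernel α β}
    [IsFiniteKernel κ] [IsFiniteKernel η] (h : μ ⊗ₘ κ ≪ μ ⊗ₘ η) :
    (μ ⊗ₘ κ).rnDeriv (μ ⊗ₘ η) =ᵐ[μ ⊗ₘ η] fun p => κ.rnDeriv η p.1 p.2 := by
  have hκ : κ =ᵐ[μ] η.withDensity (κ.rnDeriv η) := by
    filter_upwards [Measure.absolutelyContinuous_compProd_right_iff.1 h] with a ha
    exact (Kernel.withDensity_rnDeriv_eq ha).symm
  rw [Measure.compProd_congr hκ, Measure.compProd_withDensity (Kernel.measurable_rnDeriv κ η)]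
  exact Measure.rnDeriv_withDensity _ (Kernel.measurable_rnDeriv κ η)

lemma klDiv_compProd_right_eq_lintegral {μ : Measure α} [IsFiniteMeasure μ] {κ η : Kernel α β}
    [IsFiniteKernel κ] [IsFiniteKernel η] (h : μ ⊗ₘ κ ≪ μ ⊗ₘ η) :
    InformationTheory.klDiv (μ ⊗ₘ κ) (μ ⊗ₘ η) = ∫⁻ a, InformationTheory.klDiv (κ a) (η a) ∂μ := by
  have hmeas : Measurable fun p : α × β =>
      ENNReal.ofReal (InformationTheory.klFun (κ.rnDeriv η p.1 p.2).toReal) := by fun_prop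
  calc InformationTheory.klDiv (μ ⊗ₘ κ) (μ ⊗ₘ η)
    _ = ∫⁻ p, ENNReal.ofReal (InformationTheory.klFun (κ.rnDeriv η p.1 p.2).toReal)
          ∂(μ ⊗ₘ η) := by
      rw [InformationTheory.klDiv_eq_lintegral_klFun_of_ac h]
      refine lintegral_congr_ae ?_
      filter_upwards [rnDeriv_compProd_right h] with p hp
      rw [hp]
    _ = ∫⁻ a, ∫⁻ b, ENNReal.ofReal (InformationTheory.klFun (κ.rnDeriv η a b).toReal)
          ∂(η a) ∂μ := Measure.lintegral_compProd hmeas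
    _ = ∫⁻ a, InformationTheory.klDiv (κ a) (η a) ∂μ := by
      refine lintegral_congr_ae ?_
      filter_upwards [Measure.absolutelyContinuous_compProd_right_iff.1 h] with a ha
      rw [InformationTheory.klDiv_eq_lintegral_klFun_of_ac ha]
      refine lintegral_congr_ae ?_
      filter_upwards [Kernel.rnDeriv_eq_rnDeriv_measure (κ := κ) (η := η) (a := a)] with b hb
      rw [hb]

end Entropy

section Quantile

open Set

/-- The quantile function of a probability measure `ρ` on `ℝ`: the generalised inverse of its
distribution function, which carries the uniform law on `(0, 1)` to `ρ`. Outside `(0, 1)` it takes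
the junk value `0`, which keeps it measurable. -/
noncomputable def quantile (ρ : Measure ℝ) (p : ℝ) : ℝ :=
  (Ioo 0 1).indicator (fun p => sInf {y | p ≤ cdf ρ y}) p

lemma quantile_le_iff (ρ : Measure ℝ) {p y : ℝ} (hp : p ∈ Ioo 0 1) :
    quantile ρ p ≤ y ↔ p ≤ cdf ρ y := by
  obtain ⟨a, ha⟩ := ((tendsto_cdf_atBot ρ).eventually_lt_const hp.1).exists
  obtain ⟨b, hb⟩ := ((tendsto_cdf_atTop ρ).eventually_const_lt hp.2).exists
  have hbdd : BddBelow {y | p ≤ cdf ρ y} :=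
    ⟨a, fun z hz => ((monotone_cdf ρ).reflect_lt (ha.trans_le hz)).le⟩
  rw [quantile, indicator_of_mem hp]
  refine ⟨fun hle => ?_, fun hy => csInf_le hbdd hy⟩
  refine ge_of_tendsto (((cdf ρ).right_continuous y).tendsto.mono_left
    (nhdsWithin_mono _ Ioi_subset_Ici_self)) ?_
  filter_upwards [self_mem_nhdsWithin] with z hz
  obtain ⟨w, hw, hwz⟩ := exists_lt_of_csInf_lt ⟨b, hb.le⟩ (hle.trans_lt hz)
  exact hw.trans (monotone_cdf ρ hwz.le)

lemma monotoneOn_quantile (ρ : Measure ℝ) : MonotoneOn (quantile ρ) (Ioo 0 1) :=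
  fun _ hp _ hq hpq => (quantile_le_iff ρ hp).2 (hpq.trans ((quantile_le_iff ρ hq).1 le_rfl))

lemma measurable_quantile (ρ : Measure ℝ) : Measurable (quantile ρ) := by
  refine measurable_of_restrict_of_restrict_compl (s := Ioo 0 1) measurableSet_Ioo
    (monotoneOn_iff_monotone.1 (monotoneOn_quantile ρ)).measurable ?_
  have hzero : (Ioo 0 1)ᶜ.domRestrict (quantile ρ) = fun _ => 0 :=
    funext fun p => indicator_of_notMem (f := fun p => sInf {y | p ≤ cdf ρ y}) p.2
  exact hzero ▸ measurable_const

lemma measurePreserving_quantile (ρ : Measure ℝ) [IsProbabilityMeasure ρ] :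
    MeasurePreserving (quantile ρ) (volume.restrict (Ioo 0 1)) ρ := by
  refine ⟨measurable_quantile ρ, (Measure.ext_of_Iic _ _ fun y => ?_).symm⟩
  have hpre : quantile ρ ⁻¹' Iic y ∩ Ioo 0 1 = Iic (cdf ρ y) ∩ Ioo 0 1 := by
    ext p
    exact and_congr_left fun hp => quantile_le_iff ρ hp
  rw [Measure.map_apply (measurable_quantile ρ) measurableSet_Iic,
    Measure.restrict_apply (measurable_quantile ρ measurableSet_Iic), hpre,
    measure_congr ((Filter.EventuallyEq.refl _ _).inter Ioo_ae_eq_Ioc), inter_comm,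
    Ioc_inter_Iic, inf_eq_right.2 (cdf_le_one ρ y), Real.volume_Ioc, sub_zero, ofReal_cdf]

lemma continuous_cdf (μ : Measure ℝ) [IsProbabilityMeasure μ] [NullSingletonClass μ] :
    Continuous (cdf μ) := by
  refine continuous_iff_continuousAt.2 fun x => ?_
  rw [(monotone_cdf μ).continuousAt_iff_leftLim_eq_rightLim, StieltjesFunction.rightLim_eq]
  refine ((monotone_cdf μ).leftLim_le le_rfl).antisymm (sub_nonpos.1 (ENNReal.ofReal_eq_zero.1 ?_))
  rw [← StieltjesFunction.measure_singleton, measure_cdf, measure_singleton]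

lemma cdf_quantile (μ : Measure ℝ) [IsProbabilityMeasure μ] [NullSingletonClass μ] {p : ℝ}
    (hp : p ∈ Ioo 0 1) : cdf μ (quantile μ p) = p := by
  refine le_antisymm ?_ ((quantile_le_iff μ hp).1 le_rfl)
  refine le_of_tendsto ((continuous_cdf μ).continuousWithinAt (s := Iio (quantile μ p))).tendsto ?_
  filter_upwards [self_mem_nhdsWithin] with y hy
  exact (not_le.1 fun h => (not_le.2 hy) ((quantile_le_iff μ hp).2 h)).le

lemma measurePreserving_cdf (μ : Measure ℝ) [IsProbabilityMeasure μ] [NullSingletonClass μ] :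
    MeasurePreserving (cdf μ) μ (volume.restrict (Ioo 0 1)) := by
  have hq := measurePreserving_quantile μ
  refine ⟨(monotone_cdf μ).measurable, ?_⟩
  have hcdf : (cdf μ) ∘ quantile μ =ᵐ[volume.restrict (Ioo 0 1)] id := by
    filter_upwards [ae_restrict_mem measurableSet_Ioo] with p hp
    exact cdf_quantile μ hp
  calc μ.map (cdf μ)
    _ = ((volume.restrict (Ioo 0 1)).map (quantile μ)).map (cdf μ) := by rw [hq.map_eq]
    _ = (volume.restrict (Ioo 0 1)).map id := by
      rw [Measure.map_map (monotone_cdf μ).measurable hq.measurable, Measure.map_congr hcdf]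
    _ = volume.restrict (Ioo 0 1) := Measure.map_id

lemma ae_cdf_mem_Ioo (μ : Measure ℝ) [IsProbabilityMeasure μ] [NullSingletonClass μ] :
    ∀ᵐ x ∂μ, cdf μ x ∈ Ioo 0 1 :=
  (measurePreserving_cdf μ).quasiMeasurePreserving.ae (ae_restrict_mem measurableSet_Ioo)

lemma setIntegral_Ioi_eq_zero_of_cdf_notMem_Ioo (μ : Measure ℝ) [IsProbabilityMeasure μ]
    {h : ℝ → ℝ} (hh0 : ∫ z, h z ∂μ = 0) {x : ℝ}
    (hx : cdf μ x ∉ Ioo 0 1) : ∫ z in Ioi x, h z ∂μ = 0 := by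
  rcases (cdf_nonneg μ x).eq_or_lt with hzero | hpos
  · have hfull : (Ioi x : Set ℝ) =ᵐ[μ] univ := by
      rw [ae_eq_univ, compl_Ioi, ← ofReal_cdf, ← hzero, ENNReal.ofReal_zero]
    rw [setIntegral_congr_set hfull, setIntegral_univ, hh0]
  · have hone : μ (Iic x) = 1 := by
      rw [← ofReal_cdf, (cdf_le_one μ x).antisymm (not_lt.1 fun hlt => hx ⟨hpos, hlt⟩),
        ENNReal.ofReal_one]
    refine setIntegral_measure_zero h ?_
    rwa [← compl_Iic, prob_compl_eq_zero_iff measurableSet_Iic]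

lemma measurableSet_cdf_preimage_Ioo (μ : Measure ℝ) : MeasurableSet (cdf μ ⁻¹' Ioo 0 1) :=
  (monotone_cdf μ).measurable measurableSet_Ioo

/-- The monotone rearrangement of an atomless `μ` onto `ρ`, the optimal map between them for every
convex cost on `ℝ`. -/
noncomputable def monotoneTransport (μ ρ : Measure ℝ) : ℝ → ℝ := quantile ρ ∘ cdf μ

lemma measurable_monotoneTransport (μ ρ : Measure ℝ) : Measurable (monotoneTransport μ ρ) :=
  (measurable_quantile ρ).comp (monotone_cdf μ).measurable

lemma measurePreserving_monotoneTransport (μ ρ : Measure ℝ) [IsProbabilityMeasure μ]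
    [NullSingletonClass μ] [IsProbabilityMeasure ρ] :
    MeasurePreserving (monotoneTransport μ ρ) μ ρ :=
  (measurePreserving_quantile ρ).comp (measurePreserving_cdf μ)

lemma monotoneTransport_preimage_Ioi_ae_eq (μ ρ : Measure ℝ) [IsProbabilityMeasure μ]
    [NullSingletonClass μ] [IsProbabilityMeasure ρ] [NullSingletonClass ρ] {x : ℝ}
    (hx : cdf μ x ∈ Ioo 0 1) :
    monotoneTransport μ ρ ⁻¹' Ioi (monotoneTransport μ ρ x) =ᵐ[μ] Ioi x := by
  have hne : ∀ᵐ z ∂μ, monotoneTransport μ ρ z ≠ monotoneTransport μ ρ x :=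
    (measurePreserving_monotoneTransport μ ρ).quasiMeasurePreserving.ae (Measure.ae_ne _ _)
  filter_upwards [ae_cdf_mem_Ioo μ, hne] with z hz hzx
  refine propext ⟨fun hlt => ?_, fun hlt => ?_⟩
  · exact not_le.1 fun hle => not_le.2 hlt (monotoneOn_quantile ρ hz hx (monotone_cdf μ hle))
  · exact (monotoneOn_quantile ρ hx hz (monotone_cdf μ (le_of_lt hlt))).lt_of_ne hzx.symm

variable {α : Type*} [MeasurableSpace α]

lemma measurable_cdf_kernel (κ : Kernel α ℝ) [IsMarkovKernel κ] :
    Measurable fun p : α × ℝ => cdf (κ p.1) p.2 := by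
  simp only [cdf_eq_real, measureReal_def]
  have hle : MeasurableSet {q : (α × ℝ) × ℝ | q.2 ≤ q.1.2} :=
    measurableSet_le measurable_snd measurable_fst.snd
  exact (Kernel.measurable_kernel_prodMk_left (κ := κ.comap Prod.fst measurable_fst)
    hle).ennreal_toReal

lemma measurable_monotoneTransport_kernel (κ : Kernel α ℝ) [IsMarkovKernel κ] (ρ : Measure ℝ) :
    Measurable fun p : α × ℝ => monotoneTransport (κ p.1) ρ p.2 :=
  (measurable_quantile ρ).comp (measurable_cdf_kernel κ)

end Quantile

section IntegrationByParts

open Set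

/-- The kernel `1_{x < z} - 1_{x < 0}`, which represents `z` as `∫ x, layerKernel x z` for `z` of
either sign. -/
noncomputable def layerKernel (x z : ℝ) : ℝ :=
  (Ioi x).indicator 1 z - (Iio 0).indicator 1 x

lemma layerKernel_eq_indicator_sub_indicator (x z : ℝ) :
    layerKernel x z = (Ico 0 z).indicator 1 x - (Ico z 0).indicator 1 x := by
  simp only [layerKernel, indicator, mem_Ioi, mem_Iio, mem_Ico, Pi.one_apply]
  grind

lemma abs_layerKernel (x z : ℝ) :
    |layerKernel x z| = (Ico 0 z).indicator 1 x + (Ico z 0).indicator 1 x := by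
  rw [layerKernel_eq_indicator_sub_indicator]
  simp only [indicator, mem_Ico, Pi.one_apply]
  grind

lemma integrable_indicator_Ico_one (a b : ℝ) : Integrable ((Ico a b).indicator (1 : ℝ → ℝ)) :=
  (integrable_indicator_iff measurableSet_Ico).2 (integrableOn_const (by simp))

lemma measurable_layerKernel : Measurable fun p : ℝ × ℝ => layerKernel p.1 p.2 :=
  (measurable_const.indicator (measurableSet_lt measurable_fst measurable_snd)).sub
    ((measurable_one.indicator measurableSet_Iio).comp measurable_fst)

lemma integrable_layerKernel (z : ℝ) : Integrable fun x => layerKernel x z := by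
  simp only [layerKernel_eq_indicator_sub_indicator]
  exact (integrable_indicator_Ico_one 0 z).sub (integrable_indicator_Ico_one z 0)

lemma integral_layerKernel (z : ℝ) : ∫ x, layerKernel x z = z := by
  simp only [layerKernel_eq_indicator_sub_indicator]
  rw [integral_sub (integrable_indicator_Ico_one 0 z) (integrable_indicator_Ico_one z 0),
    integral_indicator_one measurableSet_Ico, integral_indicator_one measurableSet_Ico]
  simp

lemma integral_abs_layerKernel (z : ℝ) : ∫ x, |layerKernel x z| = |z| := by
  simp only [abs_layerKernel]
  rw [integral_add (integrable_indicator_Ico_one 0 z) (integrable_indicator_Ico_one z 0),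
    integral_indicator_one measurableSet_Ico, integral_indicator_one measurableSet_Ico]
  simp

variable {μ : Measure ℝ} {h : ℝ → ℝ}

lemma integral_layerKernel_mul (hh : Integrable h μ) (hh0 : ∫ z, h z ∂μ = 0) (x : ℝ) :
    ∫ z, layerKernel x z * h z ∂μ = ∫ z in Ioi x, h z ∂μ := by
  have hsplit (z : ℝ) : layerKernel x z * h z
      = (Ioi x).indicator h z - (Iio 0).indicator 1 x * h z := by
    rw [layerKernel, sub_mul, ← indicator_mul_left]
    simp
  simp only [hsplit]
  rw [integral_sub (hh.indicator measurableSet_Ioi) (hh.const_mul _), integral_const_mul, hh0,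
    mul_zero, sub_zero, integral_indicator measurableSet_Ioi]

lemma integrable_uncurry_layerKernel_mul [SFinite μ] (hh : AEStronglyMeasurable h μ)
    (hzh : Integrable (fun z => z * h z) μ) :
    Integrable (Function.uncurry fun x z => layerKernel x z * h z) (volume.prod μ) := by
  have hmeas : AEStronglyMeasurable (Function.uncurry fun x z => layerKernel x z * h z)
      (volume.prod μ) := measurable_layerKernel.aestronglyMeasurable.mul hh.comp_snd
  refine (integrable_prod_iff' hmeas).2
    ⟨ae_of_all _ fun z => (integrable_layerKernel z).mul_const (h z), ?_⟩
  simpa only [Function.uncurry_apply_pair, norm_mul, integral_mul_const,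
    integral_abs_layerKernel, Real.norm_eq_abs] using hzh.norm

lemma integrable_setIntegral_Ioi [SFinite μ] (hh : Integrable h μ) (hh0 : ∫ z, h z ∂μ = 0)
    (hzh : Integrable (fun z => z * h z) μ) : Integrable fun x => ∫ z in Ioi x, h z ∂μ := by
  have hprod := integrable_uncurry_layerKernel_mul hh.aestronglyMeasurable hzh
  simpa only [Function.uncurry_apply_pair, integral_layerKernel_mul hh hh0]
    using hprod.integral_prod_left

lemma integral_setIntegral_Ioi [SFinite μ] (hh : Integrable h μ) (hh0 : ∫ z, h z ∂μ = 0)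
    (hzh : Integrable (fun z => z * h z) μ) :
    ∫ x, ∫ z in Ioi x, h z ∂μ = ∫ z, z * h z ∂μ := by
  have hswap := integral_integral_swap
    (integrable_uncurry_layerKernel_mul hh.aestronglyMeasurable hzh)
  simpa only [integral_layerKernel_mul hh hh0, integral_mul_const, integral_layerKernel] using hswap

end IntegrationByParts

section Gaussian

open Set

variable {m : ℝ} {v : ℝ≥0}

lemma integrableOn_gaussianReal_iff (hv : v ≠ 0) {s : Set ℝ} (hs : MeasurableSet s) {f : ℝ → ℝ} :
    IntegrableOn f s (gaussianReal m v) ↔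
      IntegrableOn (fun x => gaussianPDFReal m v x * f x) s := by
  rw [IntegrableOn, gaussianReal_of_var_ne_zero _ hv, restrict_withDensity hs,
    integrable_withDensity_iff_integrable_smul' (measurable_gaussianPDF _ _)
      (ae_of_all _ fun _ => gaussianPDF_lt_top)]
  simp only [toReal_gaussianPDF, smul_eq_mul, IntegrableOn]

lemma setIntegral_gaussianReal (hv : v ≠ 0) {s : Set ℝ} (hs : MeasurableSet s) (f : ℝ → ℝ) :
    ∫ x in s, f x ∂gaussianReal m v = ∫ x in s, gaussianPDFReal m v x * f x := by
  rw [gaussianReal_of_var_ne_zero _ hv, restrict_withDensity hs,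
    integral_withDensity_eq_integral_toReal_smul (measurable_gaussianPDF _ _)
      (ae_of_all _ fun _ => gaussianPDF_lt_top)]
  simp only [toReal_gaussianPDF, smul_eq_mul]

lemma hasDerivAt_neg_mul_gaussianPDFReal (hv : v ≠ 0) (x : ℝ) :
    HasDerivAt (fun y => -(v * gaussianPDFReal m v y)) (gaussianPDFReal m v x * (x - m)) x := by
  have hexponent : HasDerivAt (fun y : ℝ => -(y - m) ^ 2 / (2 * v)) (-(x - m) / v) x := by
    refine ((((hasDerivAt_id x).sub_const m).pow 2).neg.div_const (2 * (v : ℝ))).congr_deriv ?_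
    simp only [id]
    field_simp
    ring
  refine ((hexponent.exp.const_mul (√(2 * Real.pi * v))⁻¹).const_mul (v : ℝ)).neg.congr_deriv ?_
  rw [gaussianPDFReal]
  field_simp

lemma tendsto_gaussianPDFReal_atTop : Filter.Tendsto (gaussianPDFReal m v) .atTop (nhds 0) := by
  rcases eq_or_ne v 0 with rfl | hv
  · exact gaussianPDFReal_zero_var m ▸ tendsto_const_nhds
  have hsq : Filter.Tendsto (fun x : ℝ => (x - m) ^ 2 / (2 * v)) .atTop .atTop :=
    ((Filter.tendsto_pow_atTop two_ne_zero).comp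
      (Filter.tendsto_atTop_add_const_right _ (-m) Filter.tendsto_id)).atTop_div_const
      (by positivity)
  simpa only [gaussianPDFReal_def, neg_div, mul_zero, Function.comp_def] using
    (Real.tendsto_exp_neg_atTop_nhds_zero.comp hsq).const_mul (√(2 * Real.pi * v))⁻¹

lemma integrable_sub_gaussianReal : Integrable (fun y => y - m) (gaussianReal m v) :=
  ((memLp_id_gaussianReal' 1 (by simp)).integrable le_rfl).sub (integrable_const m)

lemma integral_sub_gaussianReal : ∫ y, (y - m) ∂gaussianReal m v = 0 := by
  have hid : Integrable (fun y => y) (gaussianReal m v) :=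
    (memLp_id_gaussianReal' 1 (by simp)).integrable le_rfl
  rw [integral_sub hid (integrable_const m), integral_id_gaussianReal]
  simp

lemma setIntegral_Ioi_sub_gaussianReal (hv : v ≠ 0) (s : ℝ) :
    ∫ y in Ioi s, (y - m) ∂gaussianReal m v = v * gaussianPDFReal m v s := by
  have hderiv := hasDerivAt_neg_mul_gaussianPDFReal (m := m) hv
  have hlim : Filter.Tendsto (fun y => -(v * gaussianPDFReal m v y)) .atTop (nhds 0) := by
    simpa using ((tendsto_gaussianPDFReal_atTop (m := m) (v := v)).const_mul (v : ℝ)).neg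
  rw [setIntegral_gaussianReal hv measurableSet_Ioi,
    integral_Ioi_of_hasDerivAt_of_tendsto (hderiv s).continuousAt.continuousWithinAt
      (fun x _ => hderiv x) ((integrableOn_gaussianReal_iff hv measurableSet_Ioi).1
        integrable_sub_gaussianReal.integrableOn) hlim]
  ring

lemma integral_sub_sq_gaussianReal : ∫ y, (y - m) ^ 2 ∂gaussianReal m v = v := by
  rw [← variance_fun_id_gaussianReal (μ := m), variance_eq_integral measurable_id'.aemeasurable,
    integral_id_gaussianReal]

lemma lintegral_sq_gaussianReal (v : ℝ≥0) :
    ∫⁻ x, ENNReal.ofReal (x ^ 2) ∂gaussianReal 0 v = v := by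
  have hint : Integrable (fun x : ℝ => x ^ 2) (gaussianReal 0 v) :=
    (memLp_id_gaussianReal 2).integrable_sq
  rw [← ofReal_integral_eq_lintegral_ofReal hint (ae_of_all _ fun _ => sq_nonneg _)]
  simpa using congrArg ENNReal.ofReal (integral_sub_sq_gaussianReal (m := 0) (v := v))

lemma integrable_exp_sq_gaussianReal (hv : v ≠ 0) :
    Integrable (fun x => Real.exp ((x - m) ^ 2 / (4 * v))) (gaussianReal m v) := by
  rw [← integrableOn_univ, integrableOn_gaussianReal_iff hv .univ, integrableOn_univ]
  have hv' : 0 < (4 * v : ℝ)⁻¹ := by positivity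
  refine (((integrable_exp_neg_mul_sq hv').comp_sub_right m).const_mul
    (√(2 * Real.pi * v))⁻¹).congr (ae_of_all _ fun x => ?_)
  simp only [gaussianPDFReal, mul_assoc, ← Real.exp_add]
  congr 2
  field_simp
  ring

lemma nullSingletonClass_of_absolutelyContinuous_gaussianReal {μ : Measure ℝ} (hv : v ≠ 0)
    (hμ : μ ≪ gaussianReal m v) : NullSingletonClass μ :=
  have := nullSingletonClass_gaussianReal (μ := m) hv
  ⟨fun x => hμ (measure_singleton x)⟩

lemma memLp_two_id_of_integrable_llr_gaussianReal {μ : Measure ℝ} [IsFiniteMeasure μ] (hv : v ≠ 0)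
    (hμ : μ ≪ gaussianReal m v) (hllr : Integrable (llr μ (gaussianReal m v)) μ) :
    MemLp id 2 μ := by
  have hsq := integrable_of_integrable_exp_of_integrable_llr hμ hllr (by fun_prop)
    (fun x => by positivity) (integrable_exp_sq_gaussianReal hv)
  have hsub : MemLp (fun x => x - m) 2 μ := by
    refine (memLp_two_iff_integrable_sq (by fun_prop)).2 ((hsq.const_mul (4 * v)).congr ?_)
    exact ae_of_all _ fun x => by field_simp
  exact (hsub.add (memLp_const m)).ae_eq (ae_of_all _ fun x => sub_add_cancel x m)

end Gaussian

section Talagrand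

open Set

variable {m : ℝ} {v : ℝ≥0} {μ : Measure ℝ} [IsProbabilityMeasure μ]
  [NullSingletonClass μ]

lemma memLp_monotoneTransport_gaussianReal :
    MemLp (monotoneTransport μ (gaussianReal m v)) 2 μ :=
  (memLp_id_gaussianReal' 2 (by simp)).comp_measurePreserving
    (measurePreserving_monotoneTransport μ (gaussianReal m v))

lemma integral_monotoneTransport_sub_gaussianReal :
    ∫ x, (monotoneTransport μ (gaussianReal m v) x - m) ∂μ = 0 :=
  calc ∫ x, (monotoneTransport μ (gaussianReal m v) x - m) ∂μ
    _ = ∫ y, (y - m) ∂gaussianReal m v :=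
      (measurePreserving_monotoneTransport μ _).hasLaw.integral_comp (f := fun y => y - m)
        (by fun_prop)
    _ = 0 := integral_sub_gaussianReal

lemma integral_monotoneTransport_sub_sq_gaussianReal :
    ∫ x, (monotoneTransport μ (gaussianReal m v) x - m) ^ 2 ∂μ = v :=
  ((measurePreserving_monotoneTransport μ _).hasLaw.integral_comp (f := fun y => (y - m) ^ 2)
    (by fun_prop)).trans integral_sub_sq_gaussianReal

lemma setIntegral_Ioi_monotoneTransport_sub_gaussianReal (hv : v ≠ 0)
    {x : ℝ} (hx : cdf μ x ∈ Ioo 0 1) :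
    ∫ z in Ioi x, (monotoneTransport μ (gaussianReal m v) z - m) ∂μ
      = v * gaussianPDFReal m v (monotoneTransport μ (gaussianReal m v) x) := by
  have := nullSingletonClass_gaussianReal (μ := m) hv
  have hS := measurePreserving_monotoneTransport μ (gaussianReal m v)
  rw [← setIntegral_Ioi_sub_gaussianReal hv,
    ← setIntegral_congr_set (monotoneTransport_preimage_Ioi_ae_eq μ (gaussianReal m v) hx)]
  exact (hS.restrict_preimage measurableSet_Ioi).hasLaw.integral_comp (f := fun y => y - m)
    (by fun_prop)

lemma indicator_gaussianPDFReal_monotoneTransport (hv : v ≠ 0) :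
    (cdf μ ⁻¹' Ioo 0 1).indicator
        (fun x => v * gaussianPDFReal m v (monotoneTransport μ (gaussianReal m v) x))
      = fun x => ∫ z in Ioi x, (monotoneTransport μ (gaussianReal m v) z - m) ∂μ := by
  funext x
  by_cases hx : x ∈ cdf μ ⁻¹' Ioo 0 1
  · rw [indicator_of_mem hx, setIntegral_Ioi_monotoneTransport_sub_gaussianReal hv hx]
  · rw [indicator_of_notMem hx, setIntegral_Ioi_eq_zero_of_cdf_notMem_Ioo μ
      integral_monotoneTransport_sub_gaussianReal hx]

lemma integrable_mul_monotoneTransport_sub_gaussianReal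
    (hμ : MemLp id 2 μ) :
    Integrable (fun x => x * (monotoneTransport μ (gaussianReal m v) x - m)) μ :=
  hμ.integrable_mul (memLp_monotoneTransport_gaussianReal.sub (memLp_const m))

lemma integrable_monotoneTransport_sub_gaussianReal :
    Integrable (fun x => monotoneTransport μ (gaussianReal m v) x - m) μ :=
  (memLp_monotoneTransport_gaussianReal.sub (memLp_const m)).integrable one_le_two

lemma integrableOn_gaussianPDFReal_monotoneTransport (hv : v ≠ 0)
    (hμ : MemLp id 2 μ) :
    IntegrableOn (fun x => gaussianPDFReal m v (monotoneTransport μ (gaussianReal m v) x))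
      (cdf μ ⁻¹' Ioo 0 1) := by
  have htail := integrable_setIntegral_Ioi
    (integrable_monotoneTransport_sub_gaussianReal (m := m) (v := v))
    integral_monotoneTransport_sub_gaussianReal
    (integrable_mul_monotoneTransport_sub_gaussianReal hμ)
  rw [← indicator_gaussianPDFReal_monotoneTransport hv,
    integrable_indicator_iff (measurableSet_cdf_preimage_Ioo μ)] at htail
  refine (htail.const_mul (v : ℝ)⁻¹).congr (ae_of_all _ fun x => ?_)
  field_simp

lemma mul_setIntegral_gaussianPDFReal_monotoneTransport (hv : v ≠ 0)
    (hμ : MemLp id 2 μ) :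
    v * ∫ x in cdf μ ⁻¹' Ioo 0 1,
        gaussianPDFReal m v (monotoneTransport μ (gaussianReal m v) x)
      = ∫ x, x * (monotoneTransport μ (gaussianReal m v) x - m) ∂μ := by
  rw [← integral_setIntegral_Ioi integrable_monotoneTransport_sub_gaussianReal
      integral_monotoneTransport_sub_gaussianReal
      (integrable_mul_monotoneTransport_sub_gaussianReal hμ),
    ← indicator_gaussianPDFReal_monotoneTransport hv,
    integral_indicator (measurableSet_cdf_preimage_Ioo μ), integral_const_mul]

lemma gaussianPDFReal_mul_exp (hv : v ≠ 0) (x y : ℝ) :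
    gaussianPDFReal m v x * Real.exp (((x - m) ^ 2 - (y - m) ^ 2) / (2 * v))
      = gaussianPDFReal m v y := by
  simp only [gaussianPDFReal, mul_assoc, ← Real.exp_add]
  congr 2
  field_simp
  ring

lemma integral_sub_monotoneTransport_sq_gaussianReal (hv : v ≠ 0) (hμ : MemLp id 2 μ) :
    ∫ x, (x - monotoneTransport μ (gaussianReal m v) x) ^ 2 ∂μ
      = 2 * v * (∫ x, ((x - m) ^ 2 - (monotoneTransport μ (gaussianReal m v) x - m) ^ 2) / (2 * v)
            ∂μ + 1 - ∫ x in cdf μ ⁻¹' Ioo 0 1,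
              gaussianPDFReal m v (monotoneTransport μ (gaussianReal m v) x)) := by
  set S := monotoneTransport μ (gaussianReal m v)
  have hx_sq : Integrable (fun x => (x - m) ^ 2) μ := (hμ.sub (memLp_const m)).integrable_sq
  have hS_sq : Integrable (fun x => (S x - m) ^ 2) μ :=
    (memLp_monotoneTransport_gaussianReal.sub (memLp_const m)).integrable_sq
  have hcross : Integrable (fun x => x * (S x - m)) μ :=
    integrable_mul_monotoneTransport_sub_gaussianReal hμ
  have hS : Integrable (fun x => S x - m) μ := integrable_monotoneTransport_sub_gaussianReal
  have hsum : Integrable (fun x => (x - m) ^ 2 + (S x - m) ^ 2) μ := hx_sq.add hS_sq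
  have hdiff : Integrable (fun x => (x - m) ^ 2 + (S x - m) ^ 2 - 2 * (x * (S x - m))) μ :=
    hsum.sub (hcross.const_mul 2)
  calc ∫ x, (x - S x) ^ 2 ∂μ
    _ = ∫ x, ((x - m) ^ 2 + (S x - m) ^ 2 - 2 * (x * (S x - m)) + 2 * m * (S x - m)) ∂μ :=
      integral_congr_ae (ae_of_all _ fun x => by ring)
    _ = ∫ x, (x - m) ^ 2 ∂μ + v - 2 * ∫ x, x * (S x - m) ∂μ := by
      rw [integral_add hdiff (hS.const_mul _), integral_sub hsum (hcross.const_mul 2),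
        integral_add hx_sq hS_sq,
        integral_const_mul, integral_const_mul, integral_monotoneTransport_sub_gaussianReal,
        integral_monotoneTransport_sub_sq_gaussianReal]
      ring
    _ = _ := by
      rw [integral_div, integral_sub hx_sq hS_sq, integral_monotoneTransport_sub_sq_gaussianReal,
        ← mul_setIntegral_gaussianPDFReal_monotoneTransport hv hμ]
      field_simp
      ring

end Talagrand

lemma integral_sub_monotoneTransport_sq_le_gaussianReal {m : ℝ} {v : ℝ≥0} {μ : Measure ℝ}
    [IsProbabilityMeasure μ] (hv : v ≠ 0) (hμ : μ ≪ gaussianReal m v)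
    (hllr : Integrable (llr μ (gaussianReal m v)) μ) :
    ∫ x, (x - monotoneTransport μ (gaussianReal m v) x) ^ 2 ∂μ
      ≤ 2 * v * ∫ x, llr μ (gaussianReal m v) x ∂μ := by
  have := nullSingletonClass_of_absolutelyContinuous_gaussianReal hv hμ
  have hμ2 := memLp_two_id_of_integrable_llr_gaussianReal hv hμ hllr
  have hB := measurableSet_cdf_preimage_Ioo μ
  set S := monotoneTransport μ (gaussianReal m v)
  have hS_meas : Measurable S := measurable_monotoneTransport _ _
  have hg : Integrable (fun x => ((x - m) ^ 2 - (S x - m) ^ 2) / (2 * v)) μ :=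
    ((hμ2.sub (memLp_const m)).integrable_sq.sub
      (memLp_monotoneTransport_gaussianReal.sub (memLp_const m)).integrable_sq).div_const _
  have hexp : IntegrableOn (fun x => Real.exp (((x - m) ^ 2 - (S x - m) ^ 2) / (2 * v)))
      (cdf μ ⁻¹' Set.Ioo 0 1) (gaussianReal m v) := by
    simpa only [integrableOn_gaussianReal_iff hv hB, gaussianPDFReal_mul_exp hv]
      using integrableOn_gaussianPDFReal_monotoneTransport hv hμ2
  have hDV := integral_add_one_le_integral_llr_add_integral_exp hμ hllr (by fun_prop) hg hB
    (ae_cdf_mem_Ioo μ) hexp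
  simp only [setIntegral_gaussianReal hv hB, gaussianPDFReal_mul_exp hv] at hDV
  rw [integral_sub_monotoneTransport_sq_gaussianReal hv hμ2]
  gcongr
  linarith

lemma lintegral_sub_monotoneTransport_sq_le_gaussianReal {v : ℝ≥0} (hv : v ≠ 0) (m : ℝ)
    (μ : Measure ℝ) [IsProbabilityMeasure μ] :
    ∫⁻ x, ENNReal.ofReal ((x - monotoneTransport μ (gaussianReal m v) x) ^ 2) ∂μ
      ≤ 2 * v * InformationTheory.klDiv μ (gaussianReal m v) := by
  rcases eq_or_ne (InformationTheory.klDiv μ (gaussianReal m v)) ⊤ with htop | hfin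
  · rw [htop, ENNReal.mul_top (by positivity)]
    exact le_top
  obtain ⟨hμ, hllr⟩ := InformationTheory.klDiv_ne_top_iff.1 hfin
  have := nullSingletonClass_of_absolutelyContinuous_gaussianReal hv hμ
  have hsq := ((memLp_two_id_of_integrable_llr_gaussianReal hv hμ hllr).sub
    (memLp_monotoneTransport_gaussianReal (m := m) (v := v))).integrable_sq
  rw [informationTheory_klDiv_of_isProbabilityMeasure hμ hllr]
  calc ∫⁻ x, ENNReal.ofReal ((x - monotoneTransport μ (gaussianReal m v) x) ^ 2) ∂μ
    _ = ENNReal.ofReal (∫ x, (x - monotoneTransport μ (gaussianReal m v) x) ^ 2 ∂μ) :=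
      (ofReal_integral_eq_lintegral_ofReal hsq (ae_of_all _ fun _ => sq_nonneg _)).symm
    _ ≤ ENNReal.ofReal (2 * v * ∫ x, llr μ (gaussianReal m v) x ∂μ) :=
      ENNReal.ofReal_le_ofReal (integral_sub_monotoneTransport_sq_le_gaussianReal hv hμ hllr)
    _ = 2 * v * ENNReal.ofReal (∫ x, llr μ (gaussianReal m v) x ∂μ) := by
      rw [ENNReal.ofReal_mul (by positivity), ENNReal.ofReal_mul two_pos.le, ENNReal.ofReal_ofNat,
        ENNReal.ofReal_coe_nnreal]

section TransportEntropy

variable {α β : Type*} [MeasurableSpace α] [MeasurableSpace β]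

/-- A transport–entropy inequality realised by maps: every probability measure `ν` of finite
entropy relative to `γ` is carried onto `γ` by a map of cost at most `C * KL(ν ‖ γ)`. For the cost
`‖x - y‖²` this is Talagrand's inequality `W₂²(ν, γ) ≤ C * KL(ν ‖ γ)` with a Monge map in place of
a coupling. -/
def HasTransportEntropyMap (c : α → α → ℝ≥0∞) (C : ℝ≥0∞) (γ : Measure α) : Prop :=
  ∀ ν : Measure α, [IsProbabilityMeasure ν] → InformationTheory.klDiv ν γ ≠ ⊤ →
    ∃ S : α → α, MeasurePreserving S ν γ ∧
      ∫⁻ x, c x (S x) ∂ν ≤ C * InformationTheory.klDiv ν γ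

lemma hasTransportEntropyMap_dirac [MeasurableSingletonClass α] {c : α → α → ℝ≥0∞} {a : α}
    (hc : c a a = 0) (C : ℝ≥0∞) : HasTransportEntropyMap c C (Measure.dirac a) := by
  intro ν _ hfin
  have hν : ∀ᵐ x ∂ν, x = a :=
    (InformationTheory.klDiv_ne_top_iff.1 hfin).1.ae_le (ae_dirac_eq (a := a) ▸ rfl)
  refine ⟨fun _ => a, ⟨measurable_const, by simp⟩, ?_⟩
  have hzero : ∫⁻ x, c x a ∂ν = ∫⁻ _, 0 ∂ν :=
    lintegral_congr_ae (hν.mono fun x hx => by simp only [hx, hc])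
  simp [hzero]

lemma HasTransportEntropyMap.map_measurableEquiv {c : β → β → ℝ≥0∞} {C : ℝ≥0∞} {γ : Measure α}
    [IsFiniteMeasure γ] (e : α ≃ᵐ β) (h : HasTransportEntropyMap (fun x y => c (e x) (e y)) C γ) :
    HasTransportEntropyMap c C (γ.map e) := by
  intro ν _ hfin
  have := Measure.isProbabilityMeasure_map (μ := ν) e.symm.measurable.aemeasurable
  have hle : InformationTheory.klDiv (ν.map e.symm) γ ≤ InformationTheory.klDiv ν (γ.map e) := by
    simpa using InformationTheory.klDiv_map_le ν (γ.map e) e.symm.measurable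
  obtain ⟨S, hS, hcost⟩ := h (ν.map e.symm) (ne_top_of_le_ne_top hfin hle)
  refine ⟨e ∘ S ∘ e.symm, (e.measurable.measurePreserving γ).comp
    (hS.comp (e.symm.measurable.measurePreserving ν)), ?_⟩
  rw [lintegral_map_equiv] at hcost
  simpa using hcost.trans (mul_le_mul_right hle C)

lemma measurePreserving_compProd_triangular {α' β' : Type*} [MeasurableSpace α']
    [MeasurableSpace β'] {μ : Measure α} {γ : Measure α'} {ρ : Measure β'} {κ : Kernel α β}
    [SFinite μ] [SigmaFinite γ] [SigmaFinite ρ] [IsSFiniteKernel κ] {S : α → α'} {T : α → β → β'}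
    (hS : MeasurePreserving S μ γ) (hT : Measurable fun p : α × β => T p.1 p.2)
    (hTρ : ∀ᵐ a ∂μ, (κ a).map (T a) = ρ) :
    MeasurePreserving (fun p => (S p.1, T p.1 p.2)) (μ ⊗ₘ κ) (γ.prod ρ) := by
  have hST : Measurable fun p : α × β => (S p.1, T p.1 p.2) :=
    (hS.measurable.comp measurable_fst).prodMk hT
  refine ⟨hST, (Measure.prod_eq fun s t hs ht => ?_).symm⟩
  have hslice : ∀ᵐ a ∂μ, κ a (Prod.mk a ⁻¹' ((fun p => (S p.1, T p.1 p.2)) ⁻¹' s ×ˢ t))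
      = (S ⁻¹' s).indicator (fun _ => ρ t) a := by
    filter_upwards [hTρ] with a ha
    have hTa : Measurable (T a) := hT.comp measurable_prodMk_left
    by_cases has : S a ∈ s
    · rw [Set.indicator_of_mem (Set.mem_preimage.2 has), ← ha, Measure.map_apply hTa ht]
      congr 1
      ext b
      simp [has]
    · rw [Set.indicator_of_notMem (by exact has)]
      convert measure_empty (μ := κ a)
      ext b
      simp [has]
  rw [Measure.map_apply hST (hs.prod ht), Measure.compProd_apply (hST (hs.prod ht)),
    lintegral_congr_ae hslice, lintegral_indicator (hS.measurable hs), setLIntegral_const,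
    hS.measure_preimage hs.nullMeasurableSet, mul_comm]

lemma lintegral_compProd_sub_monotoneTransport_sq_le {μ : Measure α} [IsFiniteMeasure μ]
    {κ : Kernel α ℝ} [IsMarkovKernel κ] {v : ℝ≥0} (hv : v ≠ 0) (m : ℝ)
    (hκ : μ ⊗ₘ κ ≪ μ ⊗ₘ Kernel.const α (gaussianReal m v)) :
    ∫⁻ p, ENNReal.ofReal ((p.2 - monotoneTransport (κ p.1) (gaussianReal m v) p.2) ^ 2) ∂(μ ⊗ₘ κ)
      ≤ 2 * v * InformationTheory.klDiv (μ ⊗ₘ κ) (μ ⊗ₘ Kernel.const α (gaussianReal m v)) := by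
  have hT := measurable_monotoneTransport_kernel κ (gaussianReal m v)
  rw [klDiv_compProd_right_eq_lintegral hκ, Measure.lintegral_compProd (by fun_prop),
    ← lintegral_const_mul' _ _ (by finiteness)]
  exact lintegral_mono fun a => lintegral_sub_monotoneTransport_sq_le_gaussianReal hv m (κ a)

lemma HasTransportEntropyMap.prod_gaussianReal {c : α → α → ℝ≥0∞}
    (hc : Measurable (Function.uncurry c)) {γ : Measure α} [IsProbabilityMeasure γ] {v : ℝ≥0}
    (hv : v ≠ 0) (m : ℝ) (h : HasTransportEntropyMap c (2 * v) γ) :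
    HasTransportEntropyMap (fun p q : α × ℝ => c p.1 q.1 + ENNReal.ofReal ((p.2 - q.2) ^ 2))
      (2 * v) (γ.prod (gaussianReal m v)) := by
  intro ν _ hfin
  obtain ⟨μ, κ, _, _, rfl⟩ : ∃ (μ : Measure α) (κ : Kernel α ℝ), IsProbabilityMeasure μ ∧
      IsMarkovKernel κ ∧ ν = μ ⊗ₘ κ :=
    ⟨ν.fst, ν.condKernel, inferInstance, inferInstance, (ν.disintegrate ν.condKernel).symm⟩
  have hchain : InformationTheory.klDiv (μ ⊗ₘ κ) (γ.prod (gaussianReal m v))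
      = InformationTheory.klDiv μ γ
        + InformationTheory.klDiv (μ ⊗ₘ κ) (μ ⊗ₘ Kernel.const α (gaussianReal m v)) := by
    rw [← Measure.compProd_const, InformationTheory.klDiv_compProd_eq_add]
  rw [hchain] at hfin ⊢
  obtain ⟨hfin_fst, hfin_cond⟩ := ENNReal.add_ne_top.1 hfin
  have hκ := (InformationTheory.klDiv_ne_top_iff.1 hfin_cond).1
  obtain ⟨S, hS, hcost⟩ := h μ hfin_fst
  have hT := measurable_monotoneTransport_kernel κ (gaussianReal m v)
  have hTρ : ∀ᵐ a ∂μ, (κ a).map (monotoneTransport (κ a) (gaussianReal m v))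
      = gaussianReal m v := by
    filter_upwards [Measure.absolutelyContinuous_compProd_right_iff.1 hκ] with a ha
    have := nullSingletonClass_of_absolutelyContinuous_gaussianReal hv ha
    exact (measurePreserving_monotoneTransport _ _).map_eq
  refine ⟨_, measurePreserving_compProd_triangular hS hT hTρ, ?_⟩
  have hc_meas : Measurable fun p : α × ℝ => c p.1 (S p.1) :=
    hc.comp (measurable_fst.prodMk (hS.measurable.comp measurable_fst))
  rw [lintegral_add_left hc_meas, mul_add, Measure.lintegral_compProd hc_meas]
  simp only [lintegral_const, measure_univ, mul_one]
  exact add_le_add hcost (lintegral_compProd_sub_monotoneTransport_sq_le hv m hκ)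

theorem hasTransportEntropyMap_pi_gaussianReal {v : ℝ≥0} (hv : v ≠ 0) (m : ℝ) (n : ℕ) :
    HasTransportEntropyMap (fun x y => ∑ i, ENNReal.ofReal ((x i - y i) ^ 2)) (2 * v)
      (Measure.pi fun _ : Fin n => gaussianReal m v) := by
  induction n with
  | zero =>
    rw [Measure.pi_of_empty _ finZeroElim]
    exact hasTransportEntropyMap_dirac (by simp) _
  | succ n ih =>
    let e := (MeasurableEquiv.piFinSuccAbove (fun _ : Fin (n + 1) => ℝ) 0).trans
      MeasurableEquiv.prodComm
    have he : MeasurePreserving e (Measure.pi fun _ => gaussianReal m v)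
        ((Measure.pi fun _ : Fin n => gaussianReal m v).prod (gaussianReal m v)) :=
      Measure.measurePreserving_swap.comp (measurePreserving_piFinSuccAbove _ 0)
    rw [← (he.symm e).map_eq]
    refine HasTransportEntropyMap.map_measurableEquiv e.symm ?_
    convert ih.prod_gaussianReal (by fun_prop) hv m using 3 with p q
    rw [Fin.sum_univ_succ, add_comm]
    rfl

end TransportEntropy

section Gluing

lemma measurePreserving_prodMap_id_compProd_comap {X Y Z : Type*} [MeasurableSpace X]
    [MeasurableSpace Y] [MeasurableSpace Z] {ν : Measure Z} {μ : Measure Y} [SFinite ν] [SFinite μ]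
    {S : Z → Y} (hS : MeasurePreserving S ν μ) (κ : Kernel Y X) [IsSFiniteKernel κ] :
    MeasurePreserving (Prod.map S id) (ν ⊗ₘ κ.comap S hS.measurable) (μ ⊗ₘ κ) := by
  have hmeas : Measurable (Prod.map S (id : X → X)) := hS.measurable.prodMap measurable_id
  refine ⟨hmeas, Measure.ext fun s hs => ?_⟩
  rw [Measure.map_apply hmeas hs, Measure.compProd_apply (hmeas hs), Measure.compProd_apply hs,
    ← hS.lintegral_comp (Kernel.measurable_kernel_prodMk_left hs)]
  rfl

lemma exists_measurePreserving_prodMap_id {X Y Z : Type*} [MeasurableSpace X]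
    [StandardBorelSpace X] [Nonempty X] [MeasurableSpace Y] [MeasurableSpace Z]
    {π : Measure (X × Y)} [IsFiniteMeasure π] {ν : Measure Z} [SFinite ν] {S : Z → Y}
    (hS : MeasurePreserving S ν π.snd) :
    ∃ Q : Measure (X × Z), Q.snd = ν ∧ MeasurePreserving (Prod.map id S) Q π := by
  let κ : Kernel Y X := (π.map Prod.swap).condKernel
  have hπ : π.snd ⊗ₘ κ = π.map Prod.swap := by
    rw [← Measure.fst_map_swap, (π.map Prod.swap).disintegrate κ]
  refine ⟨(ν ⊗ₘ κ.comap S hS.measurable).map Prod.swap, by simp, ?_⟩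
  have hglue := measurePreserving_prodMap_id_compProd_comap hS κ
  have hmap : MeasurePreserving Prod.swap (π.snd ⊗ₘ κ) π :=
    ⟨measurable_swap, by rw [hπ, Measure.map_map measurable_swap measurable_swap]; simp⟩
  refine ⟨measurable_id.prodMap hS.measurable, ?_⟩
  rw [Measure.map_map (measurable_id.prodMap hS.measurable) measurable_swap]
  exact (hmap.comp hglue).map_eq

lemma lintegral_ofReal_norm_sq_le_iff {α E : Type*} [MeasurableSpace α] [NormedAddCommGroup E]
    {μ : Measure α} (f : α → E) {a : ℝ} (ha : 0 ≤ a) :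
    ∫⁻ x, ENNReal.ofReal (‖f x‖ ^ 2) ∂μ ≤ ENNReal.ofReal (a ^ 2)
      ↔ eLpNorm f 2 μ ≤ ENNReal.ofReal a := by
  have hsq : ∫⁻ x, ENNReal.ofReal (‖f x‖ ^ 2) ∂μ = eLpNorm f 2 μ ^ 2 := by
    have hpow := eLpNorm_nnreal_pow_eq_lintegral (f := f) (μ := μ) (p := 2) two_ne_zero
    simpa [ENNReal.ofReal_pow, ofReal_norm] using hpow.symm
  rw [hsq, ENNReal.ofReal_pow ha, ENNReal.pow_le_pow_left_iff two_ne_zero]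

lemma exists_coupling_lintegral_norm_sub_sq_le {E : Type*} [NormedAddCommGroup E]
    [MeasurableSpace E] [BorelSpace E] [CompleteSpace E] [SecondCountableTopology E]
    {π : Measure (E × E)} [IsFiniteMeasure π] {ν : Measure E} [SFinite ν] {S : E → E}
    (hS : MeasurePreserving S ν π.snd) {a b : ℝ} (ha : 0 ≤ a) (hb : 0 ≤ b)
    (hπ : ∫⁻ p, ENNReal.ofReal (‖p.1 - p.2‖ ^ 2) ∂π ≤ ENNReal.ofReal (a ^ 2))
    (hν : ∫⁻ x, ENNReal.ofReal (‖x - S x‖ ^ 2) ∂ν ≤ ENNReal.ofReal (b ^ 2)) :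
    ∃ Q : Measure (E × E), Q.fst = π.fst ∧ Q.snd = ν ∧
      ∫⁻ p, ENNReal.ofReal (‖p.1 - p.2‖ ^ 2) ∂Q ≤ ENNReal.ofReal ((a + b) ^ 2) := by
  obtain ⟨Q, hQν, hQπ⟩ := exists_measurePreserving_prodMap_id hS
  have hQsnd : MeasurePreserving Prod.snd Q ν := ⟨measurable_snd, hQν⟩
  refine ⟨Q, ?_, hQν, ?_⟩
  · rw [← hQπ.map_eq, Measure.fst, Measure.fst, Measure.map_map measurable_fst hQπ.measurable]
    rfl
  rw [lintegral_ofReal_norm_sq_le_iff _ ha] at hπ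
  rw [lintegral_ofReal_norm_sq_le_iff _ hb] at hν
  rw [lintegral_ofReal_norm_sq_le_iff _ (add_nonneg ha hb), ENNReal.ofReal_add ha hb]
  have hS_meas := hS.measurable
  have hfst : eLpNorm (fun p : E × E => p.1 - S p.2) 2 Q = eLpNorm (fun p => p.1 - p.2) 2 π := by
    rw [← eLpNorm_comp_measurePreserving (by fun_prop) hQπ]
    simp only [Function.comp_def, Prod.map_fst, Prod.map_snd, id]
  have hsnd : eLpNorm (fun p : E × E => S p.2 - p.2) 2 Q = eLpNorm (fun x => x - S x) 2 ν := by
    rw [← eLpNorm_neg, ← eLpNorm_comp_measurePreserving (by fun_prop) hQsnd]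
    simp only [Function.comp_def, Pi.neg_def, neg_sub]
  calc eLpNorm (fun p : E × E => p.1 - p.2) 2 Q
    _ = eLpNorm ((fun p => p.1 - S p.2) + fun p => S p.2 - p.2) 2 Q := by
      congr 1
      exact funext fun p => (sub_add_sub_cancel _ _ _).symm
    _ ≤ eLpNorm (fun p => p.1 - S p.2) 2 Q + eLpNorm (fun p => S p.2 - p.2) 2 Q :=
      eLpNorm_add_le (by fun_prop) (by fun_prop) one_le_two
    _ ≤ ENNReal.ofReal a + ENNReal.ofReal b := by
      rw [hfst, hsnd]
      exact add_le_add hπ hν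

end Gluing

lemma klDiv_eq_informationTheory_klDiv {α : Type*} [MeasurableSpace α] (μ ν : Measure α)
    [IsProbabilityMeasure μ] [IsProbabilityMeasure ν] :
    klDiv μ ν = InformationTheory.klDiv μ ν := by
  by_cases h : μ ≪ ν ∧ Integrable (llr μ ν) μ
  · exact (if_pos h).trans (informationTheory_klDiv_of_isProbabilityMeasure h.1 h.2).symm
  · exact (if_neg h).trans (not_imp_comm.1 InformationTheory.klDiv_ne_top_iff.1 h).symm

section GaussianE

variable (n : ℕ)

instance isProbabilityMeasure_gaussianE (σ : ℝ) : IsProbabilityMeasure (gaussianE n σ) :=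
  Measure.isProbabilityMeasure_map (MeasurableEquiv.measurable _).aemeasurable

lemma map_smul_gaussianE (a σ : ℝ) : (gaussianE n σ).map (a • ·) = gaussianE n (a * σ) := by
  have hscale : (gaussianReal 0 (σ ^ 2).toNNReal).map (a * ·)
      = gaussianReal 0 ((a * σ) ^ 2).toNNReal := by
    rw [gaussianReal_map_const_mul, mul_zero, mul_pow, Real.toNNReal_mul (sq_nonneg a),
      Real.toNNReal_of_nonneg (sq_nonneg a)]
  have : SigmaFinite ((gaussianReal 0 (σ ^ 2).toNNReal).map (a * ·)) := hscale ▸ inferInstance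
  have hpi := Measure.pi_map_pi (μ := fun _ : Fin n => gaussianReal 0 (σ ^ 2).toNNReal)
    (f := fun _ x => a * x) fun _ => by fun_prop
  rw [gaussianE, gaussianE, ← hscale, ← hpi, Measure.map_map (by fun_prop) (by fun_prop),
    Measure.map_map (by fun_prop) (by fun_prop)]
  rfl

lemma gaussianE_zero : gaussianE n 0 = Measure.dirac 0 := by
  simpa using (map_smul_gaussianE n 0 0).symm

lemma ofReal_norm_sq_eq_sum {ι : Type*} [Fintype ι] (x : EuclideanSpace ℝ ι) :
    ENNReal.ofReal (‖x‖ ^ 2) = ∑ i, ENNReal.ofReal (x i ^ 2) := by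
  rw [EuclideanSpace.real_norm_sq_eq, ENNReal.ofReal_sum_of_nonneg fun _ _ => sq_nonneg _]

theorem hasTransportEntropyMap_gaussianE (τ : ℝ) :
    HasTransportEntropyMap (fun x y => ENNReal.ofReal (‖x - y‖ ^ 2)) (ENNReal.ofReal (2 * τ ^ 2))
      (gaussianE n τ) := by
  rcases eq_or_ne τ 0 with rfl | hτ
  · rw [gaussianE_zero]
    exact hasTransportEntropyMap_dirac (by simp) _
  have hτ' : (τ ^ 2).toNNReal ≠ 0 := by positivity
  refine HasTransportEntropyMap.map_measurableEquiv (MeasurableEquiv.toLp 2 (Fin n → ℝ)) ?_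
  simp only [ofReal_norm_sq_eq_sum, ENNReal.ofReal_mul two_pos.le, ENNReal.ofReal_ofNat]
  exact hasTransportEntropyMap_pi_gaussianReal hτ' 0 n

lemma lintegral_norm_sq_gaussianE (σ : ℝ) :
    ∫⁻ x, ENNReal.ofReal (‖x‖ ^ 2) ∂gaussianE n σ = ENNReal.ofReal (n * σ ^ 2) := by
  have hcoord (i : Fin n) : ∫⁻ x : Fin n → ℝ, ENNReal.ofReal (x i ^ 2)
      ∂Measure.pi (fun _ => gaussianReal 0 (σ ^ 2).toNNReal) = ENNReal.ofReal (σ ^ 2) := by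
    rw [(measurePreserving_eval (fun _ : Fin n => gaussianReal 0 (σ ^ 2).toNNReal) i).lintegral_comp
      (f := fun x => ENNReal.ofReal (x ^ 2)) (by fun_prop), lintegral_sq_gaussianReal]
    rfl
  rw [gaussianE, lintegral_map_equiv, ENNReal.ofReal_mul n.cast_nonneg, ENNReal.ofReal_natCast]
  simp only [ofReal_norm_sq_eq_sum]
  rw [lintegral_finsetSum _ fun i _ => by fun_prop]
  simp [hcoord]

/-- The law of `(σ Z, τ Z)` for a standard Gaussian vector `Z` in `ℝⁿ`, an optimal coupling of
`gaussianE n σ` and `gaussianE n τ` when `σ` and `τ` have the same sign. -/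
noncomputable def gaussianScalingCoupling (σ τ : ℝ) :
    Measure (EuclideanSpace ℝ (Fin n) × EuclideanSpace ℝ (Fin n)) :=
  (gaussianE n 1).map fun z => (σ • z, τ • z)

instance isProbabilityMeasure_gaussianScalingCoupling (σ τ : ℝ) :
    IsProbabilityMeasure (gaussianScalingCoupling n σ τ) :=
  Measure.isProbabilityMeasure_map (by fun_prop)

lemma fst_gaussianScalingCoupling (σ τ : ℝ) :
    (gaussianScalingCoupling n σ τ).fst = gaussianE n σ := by
  rw [gaussianScalingCoupling, Measure.fst_map_prodMk (by fun_prop), map_smul_gaussianE, mul_one]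

lemma snd_gaussianScalingCoupling (σ τ : ℝ) :
    (gaussianScalingCoupling n σ τ).snd = gaussianE n τ := by
  rw [gaussianScalingCoupling, Measure.snd_map_prodMk (by fun_prop), map_smul_gaussianE, mul_one]

lemma lintegral_norm_sub_sq_gaussianScalingCoupling (σ τ : ℝ) :
    ∫⁻ p, ENNReal.ofReal (‖p.1 - p.2‖ ^ 2) ∂gaussianScalingCoupling n σ τ
      = ENNReal.ofReal (n * (σ - τ) ^ 2) := by
  rw [gaussianScalingCoupling, lintegral_map (by fun_prop) (by fun_prop)]
  simp only [← sub_smul]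
  rw [← lintegral_norm_sq_gaussianE, ← mul_one (σ - τ), ← map_smul_gaussianE,
    lintegral_map (by fun_prop) (by fun_prop), mul_one]

end GaussianE

/-- Wasserstein triangle inequality combined with Talagrand's
transportation inequality: there is a coupling of `N(0, σ²Iₙ)` and `ν` whose quadratic
transport cost is at most `(√n (σ - τ) + √(2σ² KL(ν‖γ_τ)))²`. -/
theorem coupling_gaussian_talagrand
    (n : ℕ) (hn : 1 ≤ n) (σ τ : ℝ) (hσ : 0 < σ) (hτ0 : 0 ≤ τ) (hτσ : τ ≤ σ)
    (ν : Measure (EuclideanSpace ℝ (Fin n))) (hν : IsProbabilityMeasure ν)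
    (hKL : klDiv ν (gaussianE n τ) ≠ ⊤) :
    ∃ π : Measure (EuclideanSpace ℝ (Fin n) × EuclideanSpace ℝ (Fin n)),
      IsProbabilityMeasure π ∧
      π.map Prod.fst = gaussianE n σ ∧ π.map Prod.snd = ν ∧
      (∫⁻ p, ENNReal.ofReal (‖p.1 - p.2‖ ^ 2) ∂π)
        ≤ ENNReal.ofReal ((Real.sqrt n * (σ - τ)
            + Real.sqrt (2 * σ ^ 2 * (klDiv ν (gaussianE n τ)).toReal)) ^ 2) := by
  have hστ : 0 ≤ σ - τ := sub_nonneg.2 hτσ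
  rw [klDiv_eq_informationTheory_klDiv] at hKL ⊢
  obtain ⟨S, hS, hS_cost⟩ := hasTransportEntropyMap_gaussianE n τ ν hKL
  rw [← snd_gaussianScalingCoupling n σ τ] at hS
  set K := InformationTheory.klDiv ν (gaussianE n τ)
  have hgauss : ∫⁻ p, ENNReal.ofReal (‖p.1 - p.2‖ ^ 2) ∂gaussianScalingCoupling n σ τ
      ≤ ENNReal.ofReal ((√n * (σ - τ)) ^ 2) := by
    rw [lintegral_norm_sub_sq_gaussianScalingCoupling, mul_pow, Real.sq_sqrt n.cast_nonneg]
  have htalagrand : ∫⁻ x, ENNReal.ofReal (‖x - S x‖ ^ 2) ∂ν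
      ≤ ENNReal.ofReal (√(2 * σ ^ 2 * K.toReal) ^ 2) :=
    calc _ ≤ ENNReal.ofReal (2 * τ ^ 2) * K := hS_cost
      _ ≤ ENNReal.ofReal (2 * σ ^ 2) * K := by gcongr
      _ = _ := by
        rw [Real.sq_sqrt (by positivity), ENNReal.ofReal_mul (p := 2 * σ ^ 2) (by positivity),
          ENNReal.ofReal_toReal hKL]
  obtain ⟨Q, hQ_fst, hQ_snd, hQ_cost⟩ := exists_coupling_lintegral_norm_sub_sq_le hS
    (by positivity) (by positivity) hgauss htalagrand
  exact ⟨Q, ⟨by rw [← Measure.snd_univ, hQ_snd, measure_univ]⟩,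
    hQ_fst.trans (fst_gaussianScalingCoupling n σ τ), hQ_snd, hQ_cost⟩
end

section
/- Let γ₀ > 0. For each n ≥ 1 let Sₙ ⊆ ℝⁿ be a bounded Lebesgue-measurable set with uniform probability measure μₙ, whose Lebesgue measure equals (2πe·γ₀²·(1 + εₙ))^{n/2} and whose normalized second moment satisfies (1/n)·∫ ‖u‖² dμₙ(u) = Gₙ · 2πe·γ₀²·(1 + εₙ), where εₙ > −1, εₙ → 0, and Gₙ → 1/(2πe) as n → ∞. Then (1/n)·KL(μₙ ‖ γ_{γ₀}⁽ⁿ⁾) → 0 as n → ∞. -/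
open MeasureTheory ProbabilityTheory Filter
open scoped ENNReal NNReal Topology

/-! The Gaussian measure `N(0, σ²Iₙ)` is Lebesgue measure exponentially tilted by
`-‖x‖² / (2σ²)`, so for a probability measure `μ` with differential entropy `h(μ)`,
`KL(μ ‖ N(0, σ²Iₙ)) = -h(μ) + (2σ²)⁻¹ ∫ ‖x‖² dμ + (n / 2) log (2πσ²)`.
The uniform distribution on `S` has entropy `log vol S`. Per dimension, the volume condition makes
the entropy tend to `log (2πeσ²) / 2`, and since `Gₙ → 1 / (2πe)` the second moment tends to `σ²`;
the three terms then cancel in the limit. -/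

section Tilted

lemma pi_tilted {ι : Type*} [Fintype ι] {α : ι → Type*} [∀ i, MeasurableSpace (α i)]
    (μ : ∀ i, Measure (α i)) [∀ i, SigmaFinite (μ i)] (f : ∀ i, α i → ℝ) :
    Measure.pi (fun i => (μ i).tilted (f i)) =
      (Measure.pi μ).tilted fun x => ∑ i, f i (x i) := by
  refine Measure.pi_eq fun s hs => ?_
  have hpartition : ∫ x, Real.exp (∑ i, f i (x i)) ∂Measure.pi μ =
      ∏ i, ∫ y, Real.exp (f i y) ∂μ i := by
    simp_rw [Real.exp_sum]
    exact integral_fintype_prod_eq_prod fun i y => Real.exp (f i y)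
  simp_rw [tilted_apply_eq_ofReal_integral' _ (MeasurableSet.univ_pi hs), hpartition,
    Real.exp_sum, ← Finset.prod_div_distrib, Measure.restrict_pi_pi,
    fun i => tilted_apply_eq_ofReal_integral' (μ := μ i) (f i) (hs i)]
  rw [integral_fintype_prod_eq_prod
      fun i y => Real.exp (f i y) / ∫ z, Real.exp (f i z) ∂μ i,
    ENNReal.ofReal_prod_of_nonneg fun i _ => integral_nonneg fun y => by positivity]

variable {α β : Type*} [MeasurableSpace α] [MeasurableSpace β]

lemma map_tilted_comp {μ : Measure α} {ν : Measure β} {e : α ≃ᵐ β}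
    (he : MeasurePreserving e μ ν) (f : β → ℝ) :
    (μ.tilted (f ∘ e)).map e = ν.tilted f := by
  ext s hs
  have hpartition : ∫ x, Real.exp (f (e x)) ∂μ = ∫ y, Real.exp (f y) ∂ν :=
    he.integral_comp' fun y => Real.exp (f y)
  rw [e.map_apply, tilted_apply' _ _ (e.measurable hs), tilted_apply' _ _ hs]
  simp only [Function.comp_apply, hpartition]
  exact he.setLIntegral_comp_preimage_emb e.measurableEmbedding
    (fun y => ENNReal.ofReal (Real.exp (f y) / ∫ z, Real.exp (f z) ∂ν)) s

lemma klDiv_tilted_right {μ ν : Measure α} [IsProbabilityMeasure μ] [SigmaFinite ν] {f : α → ℝ}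
    (hμν : μ ≪ ν) (hfμ : Integrable f μ) (hfν : Integrable (fun x => Real.exp (f x)) ν)
    (hllr : Integrable (llr μ ν) μ) :
    klDiv μ (ν.tilted f) = ENNReal.ofReal
      (∫ x, llr μ ν x ∂μ - ∫ x, f x ∂μ + Real.log (∫ x, Real.exp (f x) ∂ν)) := by
  rw [klDiv, if_pos ⟨hμν.trans (absolutelyContinuous_tilted hfν),
    integrable_llr_tilted_right hμν hfμ hllr hfν⟩, integral_llr_tilted_right hμν hfμ hfν hllr]

end Tilted

section Gaussian

lemma gaussianReal_zero_eq_tilted {v : ℝ≥0} (hv : v ≠ 0) :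
    gaussianReal 0 v = volume.tilted fun x => -(2 * (v : ℝ))⁻¹ * x ^ 2 := by
  have hpartition : ∫ x, Real.exp (-(2 * (v : ℝ))⁻¹ * x ^ 2) = √(2 * Real.pi * v) := by
    rw [integral_gaussian, div_inv_eq_mul]
    ring_nf
  rw [gaussianReal_of_var_ne_zero 0 hv, Measure.tilted, hpartition]
  congr 1 with x
  rw [gaussianPDF, gaussianPDFReal, sub_zero, inv_mul_eq_div, neg_div, div_eq_inv_mul (x ^ 2),
    neg_mul]

lemma integral_exp_neg_norm_sq {n : ℕ} {σ : ℝ} (hσ : σ ≠ 0) :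
    ∫ x : EuclideanSpace ℝ (Fin n), Real.exp (-(2 * σ ^ 2)⁻¹ * ‖x‖ ^ 2) =
      (2 * Real.pi * σ ^ 2) ^ ((n : ℝ) / 2) := by
  rw [GaussianFourier.integral_rexp_neg_mul_sq_norm (by positivity), finrank_euclideanSpace_fin,
    div_inv_eq_mul]
  ring_nf

lemma integrable_exp_neg_norm_sq {n : ℕ} {σ : ℝ} (hσ : σ ≠ 0) :
    Integrable fun x : EuclideanSpace ℝ (Fin n) => Real.exp (-(2 * σ ^ 2)⁻¹ * ‖x‖ ^ 2) :=
  .of_integral_ne_zero <| by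
    rw [integral_exp_neg_norm_sq hσ]
    positivity

lemma gaussianE_eq_tilted (n : ℕ) {σ : ℝ} (hσ : σ ≠ 0) :
    gaussianE n σ = volume.tilted fun x => -(2 * σ ^ 2)⁻¹ * ‖x‖ ^ 2 := by
  have hv : (σ ^ 2).toNNReal ≠ 0 := by
    rw [Ne, Real.toNNReal_eq_zero, not_le]
    positivity
  have hsum : (fun x : Fin n → ℝ => ∑ i, -(2 * σ ^ 2)⁻¹ * x i ^ 2) =
      (fun x : EuclideanSpace ℝ (Fin n) => -(2 * σ ^ 2)⁻¹ * ‖x‖ ^ 2) ∘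
        MeasurableEquiv.toLp 2 (Fin n → ℝ) := by
    ext x
    simp [EuclideanSpace.real_norm_sq_eq, Finset.mul_sum]
  rw [gaussianE, gaussianReal_zero_eq_tilted hv, pi_tilted, Real.coe_toNNReal _ (sq_nonneg σ),
    ← volume_pi, hsum]
  exact map_tilted_comp (PiLp.volume_preserving_toLp (Fin n)) _

lemma klDiv_gaussianE {n : ℕ} {σ : ℝ} (hσ : σ ≠ 0) {μ : Measure (EuclideanSpace ℝ (Fin n))}
    [IsProbabilityMeasure μ] (hac : μ ≪ volume) (hllr : Integrable (llr μ volume) μ)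
    (hsq : Integrable (fun x => ‖x‖ ^ 2) μ) :
    klDiv μ (gaussianE n σ) = ENNReal.ofReal
      (∫ x, llr μ volume x ∂μ + (2 * σ ^ 2)⁻¹ * ∫ x, ‖x‖ ^ 2 ∂μ +
        n / 2 * Real.log (2 * Real.pi * σ ^ 2)) := by
  rw [gaussianE_eq_tilted n hσ,
    klDiv_tilted_right hac (hsq.const_mul _) (integrable_exp_neg_norm_sq hσ) hllr,
    integral_exp_neg_norm_sq hσ, Real.log_rpow (by positivity), integral_const_mul, neg_mul,
    sub_neg_eq_add]

lemma tendsto_klDiv_gaussianE_div {σ : ℝ} (hσ : σ ≠ 0)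
    {μ : (n : ℕ) → Measure (EuclideanSpace ℝ (Fin n))}
    (hprob : ∀ᶠ n in atTop, IsProbabilityMeasure (μ n))
    (hac : ∀ᶠ n in atTop, μ n ≪ volume)
    (hllr : ∀ᶠ n in atTop, Integrable (llr (μ n) volume) (μ n))
    (hentropy : Tendsto (fun n => (∫ x, llr (μ n) volume x ∂μ n) / n) atTop
      (𝓝 (-(Real.log (2 * Real.pi * Real.exp 1 * σ ^ 2) / 2))))
    (hsq : Tendsto (fun n => (∫ x, ‖x‖ ^ 2 ∂μ n) / n) atTop (𝓝 (σ ^ 2))) :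
    Tendsto (fun n => klDiv (μ n) (gaussianE n σ) / n) atTop (𝓝 0) := by
  have hlog : Real.log (2 * Real.pi * Real.exp 1 * σ ^ 2) =
      Real.log (2 * Real.pi * σ ^ 2) + 1 := by
    rw [mul_right_comm, Real.log_mul (by positivity) (by positivity), Real.log_exp]
  have hlim := (hentropy.add (hsq.const_mul (2 * σ ^ 2)⁻¹)).add_const
    (Real.log (2 * Real.pi * σ ^ 2) / 2)
  have hcancel : -(Real.log (2 * Real.pi * Real.exp 1 * σ ^ 2) / 2) + (2 * σ ^ 2)⁻¹ * σ ^ 2 +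
      Real.log (2 * Real.pi * σ ^ 2) / 2 = 0 := by
    rw [hlog]
    field_simp
    ring
  rw [hcancel] at hlim
  rw [← ENNReal.ofReal_zero]
  refine (ENNReal.tendsto_ofReal hlim).congr' ?_
  filter_upwards [hprob, hac, hllr, hsq.eventually_ne (pow_ne_zero 2 hσ), eventually_gt_atTop 0]
    with n _ hac hllr hsq hn
  have hn' : (0 : ℝ) < n := mod_cast hn
  -- As `σ² ≠ 0`, the second moment is eventually not the junk value `0` of a divergent integral.
  have hint : Integrable (fun x => ‖x‖ ^ 2) (μ n) :=
    .of_integral_ne_zero fun h => hsq (by rw [h, zero_div])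
  rw [klDiv_gaussianE hσ hac hllr hint, ← ENNReal.ofReal_natCast,
    ← ENNReal.ofReal_div_of_pos hn']
  congr 1
  field_simp

end Gaussian

section Uniform

variable {α : Type*} [MeasurableSpace α] {ν : Measure α} [SigmaFinite ν] {s : Set α}

lemma llr_cond_self (hs₀ : ν s ≠ 0) (hs : ν s ≠ ∞) :
    llr ν[|s] ν =ᵐ[ν[|s]] fun _ => -Real.log (ν.real s) := by
  have : IsFiniteMeasure (ν.restrict (toMeasurable ν s)) := ⟨by simpa using hs.lt_top⟩
  have hsmul : (ν[|toMeasurable ν s]).rnDeriv ν =ᵐ[ν]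
      (ν (toMeasurable ν s))⁻¹ • (ν.restrict (toMeasurable ν s)).rnDeriv ν :=
    Measure.rnDeriv_smul_left_of_ne_top _ _ (by simpa using hs₀)
  have hrestrict := Measure.rnDeriv_restrict_self ν (measurableSet_toMeasurable ν s)
  rw [← cond_toMeasurable_eq]
  filter_upwards [cond_absolutelyContinuous.ae_le hsmul, cond_absolutelyContinuous.ae_le hrestrict,
    ae_cond_mem (measurableSet_toMeasurable ν s)] with x hsmul hrestrict hx
  rw [llr, hsmul, Pi.smul_apply, hrestrict, Set.indicator_of_mem hx, Pi.one_apply, smul_eq_mul,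
    mul_one, measure_toMeasurable, ENNReal.toReal_inv, Real.log_inv, measureReal_def]

lemma integrable_llr_cond_self (hs₀ : ν s ≠ 0) (hs : ν s ≠ ∞) :
    Integrable (llr ν[|s] ν) ν[|s] :=
  (integrable_const _).congr (llr_cond_self hs₀ hs).symm

lemma integral_llr_cond_self (hs₀ : ν s ≠ 0) (hs : ν s ≠ ∞) :
    ∫ x, llr ν[|s] ν x ∂ν[|s] = -Real.log (ν.real s) := by
  have := cond_isProbabilityMeasure_of_finite hs₀ hs
  rw [integral_congr_ae (llr_cond_self hs₀ hs), integral_const, probReal_univ, one_smul]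

lemma tendsto_klDiv_cond_gaussianE_div {σ : ℝ} (hσ : σ ≠ 0)
    {S : (n : ℕ) → Set (EuclideanSpace ℝ (Fin n))}
    (hvol : Tendsto (fun n => Real.log (volume.real (S n)) / n) atTop
      (𝓝 (Real.log (2 * Real.pi * Real.exp 1 * σ ^ 2) / 2)))
    (hsq : Tendsto (fun n => (∫ x, ‖x‖ ^ 2 ∂volume[|S n]) / n) atTop (𝓝 (σ ^ 2))) :
    Tendsto (fun n => klDiv volume[|S n] (gaussianE n σ) / n) atTop (𝓝 0) := by
  have hcond : ∀ᶠ n in atTop, volume (S n) ≠ 0 ∧ volume (S n) ≠ ∞ := by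
    filter_upwards [hsq.eventually_ne (pow_ne_zero 2 hσ)] with n hn
    have hne : volume[|S n] ≠ 0 := fun h => hn (by rw [h, integral_zero_measure, zero_div])
    rwa [Ne, cond_eq_zero, not_or, and_comm] at hne
  refine tendsto_klDiv_gaussianE_div hσ
    (hcond.mono fun n hn => cond_isProbabilityMeasure_of_finite hn.1 hn.2)
    (.of_forall fun n => cond_absolutelyContinuous)
    (hcond.mono fun n hn => integrable_llr_cond_self hn.1 hn.2) (hvol.neg.congr' ?_) hsq
  filter_upwards [hcond] with n hn
  rw [integral_llr_cond_self hn.1 hn.2, neg_div]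

end Uniform

lemma tendsto_log_rpow_half_div {a : ℕ → ℝ} {A : ℝ} (ha : Tendsto a atTop (𝓝 A)) (hA : 0 < A) :
    Tendsto (fun n : ℕ => Real.log (a n ^ ((n : ℝ) / 2)) / n) atTop (𝓝 (Real.log A / 2)) := by
  refine ((ha.log hA.ne').div_const 2).congr' ?_
  filter_upwards [ha.eventually_const_lt hA, eventually_ne_atTop 0] with n han hn
  rw [Real.log_rpow han]
  field_simp

theorem klDiv_uniform_gaussian_tendsto_zero_general
    {γ₀ : ℝ} (hγ₀ : γ₀ ≠ 0)
    {S : (n : ℕ) → Set (EuclideanSpace ℝ (Fin n))}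
    {μ : (n : ℕ) → Measure (EuclideanSpace ℝ (Fin n))}
    {ε G : ℕ → ℝ}
    (hμ : ∀ᶠ n in atTop, μ n = (volume (S n))⁻¹ • (volume.restrict (S n)))
    (hvol : ∀ᶠ n : ℕ in atTop, volume (S n)
      = ENNReal.ofReal ((2 * Real.pi * Real.exp 1 * γ₀ ^ 2 * (1 + ε n)) ^ ((n : ℝ) / 2)))
    (hsm : ∀ᶠ n : ℕ in atTop, (1 / (n : ℝ)) * (∫ u, ‖u‖ ^ 2 ∂(μ n))
      = G n * (2 * Real.pi * Real.exp 1 * γ₀ ^ 2 * (1 + ε n)))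
    (hεlim : Tendsto ε atTop (𝓝 0))
    (hGlim : Tendsto G atTop (𝓝 (1 / (2 * Real.pi * Real.exp 1)))) :
    Tendsto (fun n => klDiv (μ n) (gaussianE n γ₀) / (n : ℝ≥0∞)) atTop
      (𝓝 (0 : ℝ≥0∞)) := by
  have hscale : Tendsto (fun n => 2 * Real.pi * Real.exp 1 * γ₀ ^ 2 * (1 + ε n)) atTop
      (𝓝 (2 * Real.pi * Real.exp 1 * γ₀ ^ 2)) := by
    simpa using (hεlim.const_add 1).const_mul (2 * Real.pi * Real.exp 1 * γ₀ ^ 2)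
  have hscale_pos : 0 < 2 * Real.pi * Real.exp 1 * γ₀ ^ 2 := by positivity
  have hlogvol : Tendsto (fun n => Real.log (volume.real (S n)) / n) atTop
      (𝓝 (Real.log (2 * Real.pi * Real.exp 1 * γ₀ ^ 2) / 2)) := by
    refine (tendsto_log_rpow_half_div hscale hscale_pos).congr' ?_
    filter_upwards [hvol, hscale.eventually_const_lt hscale_pos] with n hvol hpos
    rw [measureReal_def, hvol, ENNReal.toReal_ofReal (Real.rpow_nonneg hpos.le _)]
  have hsq : Tendsto (fun n => (∫ x, ‖x‖ ^ 2 ∂volume[|S n]) / n) atTop (𝓝 (γ₀ ^ 2)) := by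
    have hlim := hGlim.mul hscale
    rw [show 1 / (2 * Real.pi * Real.exp 1) * (2 * Real.pi * Real.exp 1 * γ₀ ^ 2) = γ₀ ^ 2 by
      field_simp] at hlim
    refine hlim.congr' ?_
    filter_upwards [hμ, hsm] with n hμ hsm
    rw [← hsm, hμ, ProbabilityTheory.cond, one_div_mul_eq_div]
  refine (tendsto_klDiv_cond_gaussianE_div hγ₀ hlogvol hsq).congr' ?_
  filter_upwards [hμ] with n hμ
  rw [hμ, ProbabilityTheory.cond]

/-- For a quantization-good (sphere-bound-achieving) sequence of cells,
the uniform dither becomes Gaussian-like: the normalized KL divergence of the uniform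
distribution on the cell from `N(0, γ₀²Iₙ)` tends to `0`. -/
theorem klDiv_uniform_gaussian_tendsto_zero
    (γ₀ : ℝ) (hγ₀ : 0 < γ₀)
    (S : (n : ℕ) → Set (EuclideanSpace ℝ (Fin n)))
    (μ : (n : ℕ) → Measure (EuclideanSpace ℝ (Fin n)))
    (ε G : ℕ → ℝ)
    (hbdd : ∀ n, 1 ≤ n → Bornology.IsBounded (S n))
    (hmeas : ∀ n, 1 ≤ n → MeasurableSet (S n))
    (hμ : ∀ n, 1 ≤ n → μ n = (volume (S n))⁻¹ • (volume.restrict (S n)))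
    (hvol : ∀ n, 1 ≤ n → volume (S n)
      = ENNReal.ofReal ((2 * Real.pi * Real.exp 1 * γ₀ ^ 2 * (1 + ε n)) ^ ((n : ℝ) / 2)))
    (hsm : ∀ n : ℕ, 1 ≤ n → (1 / (n : ℝ)) * (∫ u, ‖u‖ ^ 2 ∂(μ n))
      = G n * (2 * Real.pi * Real.exp 1 * γ₀ ^ 2 * (1 + ε n)))
    (hε : ∀ n, 1 ≤ n → -1 < ε n)
    (hεlim : Tendsto ε atTop (𝓝 0))
    (hGlim : Tendsto G atTop (𝓝 (1 / (2 * Real.pi * Real.exp 1)))) :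
    Tendsto (fun n => klDiv (μ n) (gaussianE n γ₀) / (n : ℝ≥0∞)) atTop
      (𝓝 (0 : ℝ≥0∞)) :=
  klDiv_uniform_gaussian_tendsto_zero_general hγ₀.ne' (eventually_atTop.2 ⟨1, hμ⟩)
    (eventually_atTop.2 ⟨1, hvol⟩) (eventually_atTop.2 ⟨1, hsm⟩) hεlim hGlim
end
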